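/- For a function F : [0,∞) → ℝ, the following are equivalent: (1) for every totally non-negative Hankel matrix A of any finite size, the entrywise image F[A] is positive semidefinite; (2) for every totally non-negative Hankel matrix A of any finite size, F[A] is again a totally non-negative Hankel matrix; (3) F applied entrywise maps M([0,∞)) into itself; (4) F agrees on (0,∞) with an absolutely monotonic entire function, and 0 ≤ F(0) ≤ lim_{ε→0⁺} F(ε). -/

import Mathlib

open MeasureTheory Filter Set
open scoped ENNReal

/-- An admissible measure: a non-negative Borel measure on `ℝ` all of whose absolute
moments are finite. -/
def IsAdmissible (μ : Measure ℝ) : Prop := ∀ k : ℕ, Integrable (fun x => x ^ k) μ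

/-- The `k`-th power moment of a measure. -/
noncomputable def moment (μ : Measure ℝ) (k : ℕ) : ℝ := ∫ x, x ^ k ∂μ

/-- `momentSet K` is the set of moment sequences of admissible measures supported in `K`. -/
def momentSet (K : Set ℝ) : Set (ℕ → ℝ) :=
  {s | ∃ μ : Measure ℝ, IsAdmissible μ ∧ μ Kᶜ = 0 ∧ ∀ k, s k = moment μ k}

/-- An absolutely monotonic entire function: a power series with non-negative
coefficients converging at every real point. -/
def AbsolutelyMonotonicEntire (G : ℝ → ℝ) : Prop :=
  ∃ c : ℕ → ℝ, (∀ n, 0 ≤ c n) ∧ ∀ x : ℝ, HasSum (fun n => c n * x ^ n) (G x)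

/-- A Hankel matrix: the `(i,j)` entry depends only on `i + j`. -/
def IsHankelMat {n : ℕ} (A : Matrix (Fin n) (Fin n) ℝ) : Prop :=
  ∀ i j k l : Fin n, (i : ℕ) + (j : ℕ) = (k : ℕ) + (l : ℕ) → A i j = A k l

/-- A totally non-negative matrix: every minor is non-negative. -/
def TotallyNonneg {m n : ℕ} (A : Matrix (Fin m) (Fin n) ℝ) : Prop :=
  ∀ (k : ℕ) (r : Fin k → Fin m) (c : Fin k → Fin n),
    StrictMono r → StrictMono c → 0 ≤ (A.submatrix r c).det

/-! Sufficiency. The Andréief identity writes a minor of the Hankel matrix of a measure on `[0, ∞)`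
as an integral of products of two generalized Vandermonde determinants of the same sign, so moment
sequences give totally non-negative Hankel matrices. Conversely, after a small perturbation both
the Hankel matrix and its shift are positive definite, and diagonalizing the two forms
simultaneously yields a quadrature measure on `[0, ∞)` with the prescribed moments. Since moment
sequences are closed under sums, products and limits of series, an absolutely monotonic entire
function preserves both classes. A jump of `F` at `0` is harmless: a zero entry forces all entries
with index strictly between the first and the last to vanish.

Necessity. It suffices to test `F` on the sequences `a + b * u ^ k`. Matrices of size two make `F`
monotone and multiplicatively mid-convex, hence continuous on `(0, ∞)`. Mollifications of `F` are
smooth and pass the same test, and Taylor expansion in `b` along `u = 2` shows that all their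
derivatives are non-negative. In the limit all forward differences of `F` are non-negative, so its
Bernstein polynomials have non-negative coefficients and converge to an entire function.
-/

section PrincipalMinors

variable {n : Type*} [Fintype n] [DecidableEq n] {R : Type*} [CommRing R]

theorem det_of_ite_mem_diagonal (A : Matrix n n R) (d : n → R) (s : Finset n) :
    (Matrix.of fun i j => if i ∈ s then A i j else Matrix.diagonal d i j).det =
      (A.submatrix ((↑) : s → n) (↑)).det * ∏ i ∈ sᶜ, d i := by
  rw [Matrix.twoBlockTriangular_det _ (· ∈ s) fun i hi j hj => ?_,
    Finset.prod_subtype _ (fun i => Finset.mem_compl) d, ← Matrix.det_diagonal]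
  · congr! 2 <;> ext i j
    · simp [Matrix.toSquareBlockProp]
    · simp [Matrix.toSquareBlockProp, i.2, Matrix.diagonal_apply, Subtype.ext_iff]
  · rw [Matrix.of_apply, if_neg hi, Matrix.diagonal_apply_ne _ (ne_of_mem_of_not_mem hj hi).symm]

theorem det_add_diagonal (A : Matrix n n R) (d : n → R) :
    (A + Matrix.diagonal d).det =
      ∑ s : Finset n, (A.submatrix ((↑) : s → n) (↑)).det * ∏ i ∈ sᶜ, d i := by
  refine (Matrix.detRowAlternating.map_add_univ A.row (Matrix.diagonal d).row).trans
    (Finset.sum_congr rfl fun s _ => ?_)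
  rw [← det_of_ite_mem_diagonal]
  congr 1
  ext i j
  by_cases hi : i ∈ s <;> simp [hi]

theorem det_add_scalar_pos_of_principal_minors_nonneg {A : Matrix n n ℝ}
    (hA : ∀ s : Finset n, 0 ≤ (A.submatrix ((↑) : s → n) (↑)).det) {t : ℝ} (ht : 0 < t) :
    0 < (A + Matrix.scalar n t).det := by
  rw [Matrix.scalar_apply, det_add_diagonal]
  refine Finset.sum_pos' (fun s _ => mul_nonneg (hA s) (Finset.prod_nonneg fun _ _ => ht.le))
    ⟨∅, Finset.mem_univ _, ?_⟩
  rw [Matrix.det_isEmpty, one_mul]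
  exact Finset.prod_pos fun _ _ => ht

theorem posSemidef_of_principal_minors_nonneg {n : Type*} [Finite n] [DecidableEq n]
    {A : Matrix n n ℝ} (hsymm : A.IsHermitian)
    (hA : ∀ s : Finset n, 0 ≤ (A.submatrix ((↑) : s → n) (↑)).det) : A.PosSemidef := by
  cases nonempty_fintype n
  refine Matrix.posSemidef_iff_isHermitian_and_spectrum_nonneg.2 ⟨hsymm, fun μ hμ => ?_⟩
  by_contra hneg
  have hdet := det_add_scalar_pos_of_principal_minors_nonneg hA (neg_pos.2 (not_le.1 hneg))
  refine spectrum.mem_iff.1 hμ ((IsUnit.sub_iff).1 ?_)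
  rw [Matrix.isUnit_iff_isUnit_det, isUnit_iff_ne_zero]
  simpa [Matrix.algebraMap_eq_diagonal, sub_eq_add_neg] using hdet.ne'

end PrincipalMinors

section TotallyNonneg

theorem TotallyNonneg.apply_nonneg {m n : ℕ} {A : Matrix (Fin m) (Fin n) ℝ} (hA : TotallyNonneg A)
    (i : Fin m) (j : Fin n) : 0 ≤ A i j := by
  simpa using hA 1 (fun _ => i) (fun _ => j) (Subsingleton.strictMono _) (Subsingleton.strictMono _)

theorem TotallyNonneg.submatrix {m n p q : ℕ} {A : Matrix (Fin m) (Fin n) ℝ}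
    (hA : TotallyNonneg A) {r : Fin p → Fin m} {c : Fin q → Fin n} (hr : StrictMono r)
    (hc : StrictMono c) : TotallyNonneg (A.submatrix r c) := fun k r' c' hr' hc' =>
  hA k (r ∘ r') (c ∘ c') (hr.comp hr') (hc.comp hc')

theorem TotallyNonneg.posSemidef {n : ℕ} {A : Matrix (Fin n) (Fin n) ℝ} (hA : TotallyNonneg A)
    (hsymm : A.IsHermitian) : A.PosSemidef := by
  refine posSemidef_of_principal_minors_nonneg hsymm fun s => ?_
  rw [← Matrix.det_submatrix_equiv_self (s.orderIsoOfFin rfl).toEquiv]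
  exact hA _ _ _ (s.orderEmbOfFin rfl).strictMono (s.orderEmbOfFin rfl).strictMono

theorem totallyNonneg_of_tendsto {α : Type*} {l : Filter α} [l.NeBot] {m n : ℕ}
    {A : α → Matrix (Fin m) (Fin n) ℝ} {B : Matrix (Fin m) (Fin n) ℝ}
    (hA : ∀ᶠ a in l, TotallyNonneg (A a)) (hlim : Tendsto A l (nhds B)) : TotallyNonneg B := by
  intro k r c hr hc
  have hdet : Continuous fun M : Matrix (Fin m) (Fin n) ℝ => (M.submatrix r c).det :=
    (continuous_id.matrix_submatrix r c).matrix_det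
  exact ge_of_tendsto ((hdet.tendsto B).comp hlim) (hA.mono fun a ha => ha k r c hr hc)

theorem IsHankelMat.isHermitian {n : ℕ} {A : Matrix (Fin n) (Fin n) ℝ} (hA : IsHankelMat A) :
    A.IsHermitian := by
  ext i j
  simpa using hA j i i j (add_comm _ _)

end TotallyNonneg

section GeneralizedVandermonde

open Polynomial

theorem signVariations_lt_card_support {P : ℝ[X]} (hP : P ≠ 0) :
    P.signVariations < P.support.card := by
  induction hcard : P.support.card generalizing P with
  | zero => simp_all
  | succ k ih =>
    have hle := P.signVariations_le_eraseLead_succ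
    by_cases herase : P.eraseLead = 0
    · have hmonomial := P.eraseLead_add_monomial_natDegree_leadingCoeff
      rw [herase, zero_add] at hmonomial
      rw [← hmonomial, signVariations_monomial]
      exact k.succ_pos
    · exact hle.trans_lt (Nat.succ_lt_succ (ih herase (card_support_eraseLead' hcard)))

theorem eq_zero_of_card_support_le_card_pos_roots {P : ℝ[X]} {S : Finset ℝ}
    (hpos : ∀ x ∈ S, 0 < x) (hroot : ∀ x ∈ S, P.eval x = 0) (hcard : P.support.card ≤ S.card) :
    P = 0 := by
  by_contra hP
  have hsub : S.val ≤ P.roots.filter (0 < ·) := by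
    rw [Multiset.le_iff_subset S.nodup]
    intro x hx
    rw [Multiset.mem_filter, mem_roots hP]
    exact ⟨hroot x hx, hpos x hx⟩
  have hdescartes := P.roots_countP_pos_le_signVariations
  rw [Multiset.countP_eq_card_filter] at hdescartes
  exact ((signVariations_lt_card_support hP).trans_le hcard).not_ge
    ((Multiset.card_le_card hsub).trans hdescartes)

/-- The matrix `(x i ^ r j)`, whose exponents `r j` need not be consecutive. -/
def generalizedVandermonde {R m n : Type*} [Monoid R] (x : m → R) (r : n → ℕ) : Matrix m n R :=
  Matrix.of fun i j => x i ^ r j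

@[simp]
theorem generalizedVandermonde_apply {R m n : Type*} [Monoid R] (x : m → R) (r : n → ℕ) (i : m)
    (j : n) : generalizedVandermonde x r i j = x i ^ r j := rfl

theorem det_generalizedVandermonde_ne_zero {n : Type*} [Fintype n] [DecidableEq n] {x : n → ℝ}
    {r : n → ℕ} (hpos : ∀ i, 0 < x i) (hx : Function.Injective x) (hr : Function.Injective r) :
    (generalizedVandermonde x r).det ≠ 0 := by
  intro hdet
  obtain ⟨v, hv, hker⟩ := Matrix.exists_mulVec_eq_zero_iff.2 hdet
  set P : ℝ[X] := ∑ j, monomial (r j) (v j) with hP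
  have coeff_P (j : n) : P.coeff (r j) = v j := by
    simp [hP, coeff_monomial, hr.eq_iff]
  have support_P : P.support ⊆ Finset.univ.image r := by
    intro k hk
    rw [mem_support_iff, hP, finsetSum_coeff] at hk
    obtain ⟨j, -, hj⟩ := Finset.exists_ne_zero_of_sum_ne_zero hk
    rw [coeff_monomial, ne_eq, ite_eq_right_iff, Classical.not_imp] at hj
    exact hj.1 ▸ Finset.mem_image_of_mem r (Finset.mem_univ j)
  have P_eq_zero : P = 0 := by
    refine eq_zero_of_card_support_le_card_pos_roots (S := Finset.univ.image x) (by simpa)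
      (fun y hy => ?_) ?_
    · obtain ⟨i, -, rfl⟩ := Finset.mem_image.1 hy
      simpa [hP, eval_finsetSum, Matrix.mulVec, dotProduct, mul_comm] using congrFun hker i
    · rw [Finset.card_image_of_injective _ hx, ← Finset.card_image_of_injective _ hr]
      exact Finset.card_le_card support_P
  exact hv (funext fun j => by rw [← coeff_P, P_eq_zero, coeff_zero, Pi.zero_apply])

section LastNode

variable {R : Type*} [CommRing R] {p : ℕ}

/-- The generalized Vandermonde determinant with nodes `x 0, …, x (p - 1)` and a last node
replaced by an indeterminate. -/
noncomputable def vandermondePolynomial (x : Fin p → R) (r : Fin (p + 1) → ℕ) : R[X] :=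
  (generalizedVandermonde (Fin.snoc (fun i => C (x i)) X : Fin (p + 1) → R[X]) r).det

theorem eval_vandermondePolynomial (x : Fin p → R) (r : Fin (p + 1) → ℕ) (t : R) :
    (vandermondePolynomial x r).eval t =
      (generalizedVandermonde (Fin.snoc x t : Fin (p + 1) → R) r).det := by
  rw [vandermondePolynomial, ← coe_evalRingHom, RingHom.map_det]
  congr 1
  ext i j
  induction i using Fin.lastCases <;> simp

theorem vandermondePolynomial_eq_sum (x : Fin p → R) (r : Fin (p + 1) → ℕ) :
    vandermondePolynomial x r = ∑ j, monomial (r j)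
      ((-1) ^ (p + j : ℕ) * (generalizedVandermonde x (r ∘ j.succAbove)).det) := by
  rw [vandermondePolynomial, Matrix.det_succ_row _ (Fin.last p)]
  refine Finset.sum_congr rfl fun j _ => ?_
  have minor_eq : (generalizedVandermonde (Fin.snoc (fun i => C (x i)) X : Fin (p + 1) → R[X])
      r).submatrix (Fin.last p).succAbove j.succAbove =
        (generalizedVandermonde x (r ∘ j.succAbove)).map C := by
    ext1 i k
    simp
  rw [minor_eq, ← RingHom.mapMatrix_apply, ← RingHom.map_det, ← C_mul_X_pow_eq_monomial]
  simp only [generalizedVandermonde_apply, Fin.snoc_last, Fin.val_last, map_mul, map_pow, map_neg,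
    map_one]
  ring

variable {x : Fin p → R} {r : Fin (p + 1) → ℕ}

theorem natDegree_vandermondePolynomial_le (hr : Monotone r) :
    (vandermondePolynomial x r).natDegree ≤ r (Fin.last p) := by
  rw [vandermondePolynomial_eq_sum]
  exact natDegree_sum_le_of_forall_le _ _ fun j _ =>
    (natDegree_monomial_le _).trans (hr (Fin.le_last j))

theorem coeff_vandermondePolynomial_last (hr : StrictMono r) :
    (vandermondePolynomial x r).coeff (r (Fin.last p)) =
      (generalizedVandermonde x (Fin.init r)).det := by
  rw [vandermondePolynomial_eq_sum, finsetSum_coeff, Finset.sum_eq_single (Fin.last p)]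
  · rw [coeff_monomial_same, Fin.val_last, Even.neg_one_pow ⟨p, rfl⟩, one_mul, Fin.succAbove_last]
    rfl
  · exact fun j _ hj => coeff_monomial_of_ne _ (hr.injective.ne hj).symm
  · simp

theorem leadingCoeff_vandermondePolynomial (hr : StrictMono r)
    (hdet : (generalizedVandermonde x (Fin.init r)).det ≠ 0) :
    (vandermondePolynomial x r).leadingCoeff = (generalizedVandermonde x (Fin.init r)).det := by
  rw [← coeff_vandermondePolynomial_last hr] at hdet ⊢
  rw [leadingCoeff, (natDegree_vandermondePolynomial_le hr.monotone).antisymm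
    (le_natDegree_of_ne_zero hdet)]

end LastNode

-- As a polynomial in its last node the determinant has no root beyond the other nodes, and its
-- leading coefficient is a determinant of the same kind, so induction applies.
theorem det_generalizedVandermonde_pos {p : ℕ} {x : Fin p → ℝ} {r : Fin p → ℕ}
    (hpos : ∀ i, 0 < x i) (hx : StrictMono x) (hr : StrictMono r) :
    0 < (generalizedVandermonde x r).det := by
  induction p with
  | zero => simp
  | succ p ih =>
    have det_init_pos : 0 < (generalizedVandermonde (Fin.init x) (Fin.init r)).det :=
      ih (fun i => hpos _) (hx.comp Fin.strictMono_castSucc) (hr.comp Fin.strictMono_castSucc)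
    rw [← Fin.snoc_init_self x, ← eval_vandermondePolynomial]
    refine zero_lt_eval_of_roots_lt_of_leadingCoeff_nonneg (fun y hy => ?_) ?_
    · by_contra! hlast
      have init_lt (i : Fin p) : Fin.init x i < y :=
        (hx (Fin.castSucc_lt_last i)).trans_le hlast
      refine det_generalizedVandermonde_ne_zero (x := Fin.snoc (Fin.init x) y) ?_ ?_ hr.injective
        ((eval_vandermondePolynomial _ _ _).symm.trans hy)
      · exact Fin.lastCases (by simpa using (hpos _).trans_le hlast)
          (fun i => by simpa [Fin.init] using hpos i.castSucc)
      · exact Fin.snoc_injective_of_injective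
          (hx.comp Fin.strictMono_castSucc).injective fun ⟨i, hi⟩ => (init_lt i).ne hi
    · rw [leadingCoeff_vandermondePolynomial hr det_init_pos.ne']
      exact det_init_pos.le

section ProductOfDeterminants

variable {p : ℕ} {x : Fin p → ℝ} {r c : Fin p → ℕ}

theorem det_generalizedVandermonde_comp_perm (x : Fin p → ℝ) (r : Fin p → ℕ)
    (σ : Equiv.Perm (Fin p)) : (generalizedVandermonde (x ∘ σ) r).det =
      (Equiv.Perm.sign σ : ℤ) * (generalizedVandermonde x r).det :=
  Matrix.det_permute σ (generalizedVandermonde x r)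

theorem det_mul_det_generalizedVandermonde_nonneg_of_pos (hpos : ∀ i, 0 < x i)
    (hr : StrictMono r) (hc : StrictMono c) :
    0 ≤ (generalizedVandermonde x r).det * (generalizedVandermonde x c).det := by
  by_cases hx : Function.Injective x
  · have hsort : StrictMono (x ∘ Tuple.sort x) :=
      (Tuple.monotone_sort x).strictMono_of_injective (hx.comp (Tuple.sort x).injective)
    have hdet := mul_pos (det_generalizedVandermonde_pos (x := x ∘ _) (fun i => hpos _) hsort hr)
      (det_generalizedVandermonde_pos (x := x ∘ _) (fun i => hpos _) hsort hc)
    rw [det_generalizedVandermonde_comp_perm, det_generalizedVandermonde_comp_perm,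
      mul_mul_mul_comm, ← Int.cast_mul, ← Units.val_mul, Int.units_mul_self, Units.val_one,
      Int.cast_one, one_mul] at hdet
    exact hdet.le
  · obtain ⟨a, b, hab, hne⟩ := Function.not_injective_iff.1 hx
    rw [Matrix.det_zero_of_row_eq hne (by ext k; simp [hab]), zero_mul]

theorem det_mul_det_generalizedVandermonde_nonneg (hnonneg : ∀ i, 0 ≤ x i)
    (hr : StrictMono r) (hc : StrictMono c) :
    0 ≤ (generalizedVandermonde x r).det * (generalizedVandermonde x c).det := by
  have hcont (q : Fin p → ℕ) :
      Continuous fun ε : ℝ => (generalizedVandermonde (fun i => x i + ε) q).det :=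
    Continuous.matrix_det <| continuous_matrix fun i j =>
      show Continuous fun ε : ℝ => (x i + ε) ^ q j by fun_prop
  have hlim : Tendsto (fun ε : ℝ => (generalizedVandermonde (fun i => x i + ε) r).det *
      (generalizedVandermonde (fun i => x i + ε) c).det) (nhdsWithin 0 (Ioi 0))
      (nhds ((generalizedVandermonde x r).det * (generalizedVandermonde x c).det)) := by
    refine Tendsto.mono_left ?_ nhdsWithin_le_nhds
    simpa only [add_zero] using ((hcont r).tendsto 0).mul ((hcont c).tendsto 0)
  refine ge_of_tendsto hlim (eventually_mem_nhdsWithin.mono fun ε hε => ?_)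
  exact det_mul_det_generalizedVandermonde_nonneg_of_pos
    (fun i => add_pos_of_nonneg_of_pos (hnonneg i) hε) hr hc

end ProductOfDeterminants

end GeneralizedVandermonde

section Andreief

variable {α ι : Type*} [Fintype ι]

theorem det_mul_det_eq_sum_perm {R : Type*} [CommRing R] [DecidableEq ι]
    (f g : ι → α → R) (x : ι → α) :
    (Matrix.of fun i j => f j (x i)).det * (Matrix.of fun i j => g j (x i)).det =
      ∑ σ : Equiv.Perm ι, (Matrix.of fun i j => f i (x (σ i)) * g j (x (σ i))).det := by
  rw [Matrix.det_apply' (Matrix.of fun i j => f j (x i)), Finset.sum_mul]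
  refine Finset.sum_congr rfl fun σ _ => ?_
  have hcolumn := Matrix.det_mul_column (fun i => f i (x (σ i)))
    (Matrix.of fun i j => g j (x (σ i)))
  have hpermute := Matrix.det_permute σ (Matrix.of fun i j => g j (x i))
  rw [mul_right_comm, mul_comm, ← hpermute]
  exact hcolumn.symm

variable [MeasurableSpace α]

theorem measurePreserving_comp_perm (μ : Measure α) [SigmaFinite μ] (σ : Equiv.Perm ι) :
    MeasurePreserving (fun x : ι → α => x ∘ σ) (Measure.pi fun _ => μ) (Measure.pi fun _ => μ) := by
  convert measurePreserving_piCongrLeft (fun _ : ι => μ) σ.symm using 1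
  ext x i
  simpa using (MeasurableEquiv.piCongrLeft_apply_apply (β := fun _ : ι => α) σ.symm x (σ i)).symm

variable {𝕜 : Type*} [RCLike 𝕜] [DecidableEq ι] {μ : Measure α} [SigmaFinite μ] {f g : ι → α → 𝕜}

theorem integrable_det_mul_of_integrable_mul
    (hfg : ∀ i j, Integrable (fun x => f i x * g j x) μ) :
    Integrable (fun x : ι → α => (Matrix.of fun i j => f i (x i) * g j (x i)).det)
      (Measure.pi fun _ => μ) := by
  simp_rw [← Matrix.det_transpose (Matrix.of _), Matrix.det_apply']
  exact integrable_finsetSum _ fun σ _ =>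
    (Integrable.fintype_prod (f := fun i x => f i x * g (σ i) x) fun i => hfg i (σ i)).const_mul _

theorem integral_det_mul_eq_det_integral_mul
    (hfg : ∀ i j, Integrable (fun x => f i x * g j x) μ) :
    ∫ x : ι → α, (Matrix.of fun i j => f i (x i) * g j (x i)).det ∂Measure.pi (fun _ => μ) =
      (Matrix.of fun i j => ∫ x, f i x * g j x ∂μ).det := by
  simp_rw [← Matrix.det_transpose (Matrix.of _), Matrix.det_apply', Matrix.transpose_apply,
    Matrix.of_apply]
  rw [integral_finsetSum]
  · refine Finset.sum_congr rfl fun σ _ => ?_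
    rw [integral_const_mul, integral_fintype_prod_eq_prod (fun i x => f i x * g (σ i) x)]
  · exact fun σ _ =>
      (Integrable.fintype_prod (f := fun i x => f i x * g (σ i) x) fun i => hfg i (σ i)).const_mul _

theorem integral_det_mul_det (hfg : ∀ i j, Integrable (fun x => f i x * g j x) μ) :
    ∫ x : ι → α, (Matrix.of fun i j => f j (x i)).det * (Matrix.of fun i j => g j (x i)).det
        ∂Measure.pi (fun _ => μ) =
      (Fintype.card ι).factorial * (Matrix.of fun i j => ∫ x, f i x * g j x ∂μ).det := by
  set Φ : (ι → α) → 𝕜 := fun x => (Matrix.of fun i j => f i (x i) * g j (x i)).det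
  have hΦ : Integrable Φ (Measure.pi fun _ => μ) := integrable_det_mul_of_integrable_mul hfg
  have hperm (σ : Equiv.Perm ι) := measurePreserving_comp_perm μ σ
  have integral_comp (σ : Equiv.Perm ι) :
      ∫ x, Φ (x ∘ σ) ∂Measure.pi (fun _ => μ) = ∫ x, Φ x ∂Measure.pi (fun _ => μ) := by
    rw [← integral_map (hperm σ).aemeasurable, (hperm σ).map_eq]
    exact (hperm σ).map_eq.symm ▸ hΦ.aestronglyMeasurable
  calc _ = ∫ x, ∑ σ : Equiv.Perm ι, Φ (x ∘ σ) ∂Measure.pi (fun _ => μ) :=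
        integral_congr_ae (.of_forall fun x => det_mul_det_eq_sum_perm f g x)
    _ = ∑ σ : Equiv.Perm ι, ∫ x, Φ (x ∘ σ) ∂Measure.pi (fun _ => μ) :=
        integral_finsetSum _ fun σ _ => (hperm σ).integrable_comp_of_integrable hΦ
    _ = _ := by
        rw [Finset.sum_congr rfl fun σ _ => integral_comp σ,
          integral_det_mul_eq_det_integral_mul hfg, Finset.sum_const, Finset.card_univ,
          Fintype.card_perm, nsmul_eq_mul]

theorem det_integral_mul_nonneg_of_ae {f g : ι → α → ℝ}
    (hfg : ∀ i j, Integrable (fun x => f i x * g j x) μ)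
    (hnonneg : ∀ᵐ x ∂Measure.pi (fun _ : ι => μ),
      0 ≤ (Matrix.of fun i j => f j (x i)).det * (Matrix.of fun i j => g j (x i)).det) :
    0 ≤ (Matrix.of fun i j => ∫ x, f i x * g j x ∂μ).det := by
  refine nonneg_of_mul_nonneg_right ?_
    (Nat.cast_pos.2 (Fintype.card ι).factorial_pos : (0 : ℝ) < (Fintype.card ι).factorial)
  exact (integral_nonneg_of_ae hnonneg).trans_eq (integral_det_mul_det hfg)

end Andreief

section MomentHankel

/-- The `n × n` Hankel matrix `(s (i + j))` of a sequence, with indices starting at `0`. -/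
def hankelMatrix (s : ℕ → ℝ) (n : ℕ) : Matrix (Fin n) (Fin n) ℝ :=
  Matrix.of fun i j => s (i + j)

@[simp]
theorem hankelMatrix_apply (s : ℕ → ℝ) {n : ℕ} (i j : Fin n) :
    hankelMatrix s n i j = s (i + j) := rfl

theorem isHankelMat_hankelMatrix (s : ℕ → ℝ) (n : ℕ) : IsHankelMat (hankelMatrix s n) :=
  fun _ _ _ _ h => congrArg s h

theorem IsAdmissible.isFiniteMeasure {μ : Measure ℝ} (hμ : IsAdmissible μ) : IsFiniteMeasure μ :=
  (integrable_const_iff_isFiniteMeasure one_ne_zero).1 (by simpa using hμ 0)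

theorem totallyNonneg_hankelMatrix_of_mem_momentSet {s : ℕ → ℝ} (hs : s ∈ momentSet (Ici 0))
    (n : ℕ) : TotallyNonneg (hankelMatrix s n) := by
  obtain ⟨μ, hμ, hsupp, hmoment⟩ := hs
  have := hμ.isFiniteMeasure
  intro p r c hr hc
  have minor_eq : (hankelMatrix s n).submatrix r c =
      Matrix.of fun i j => ∫ x, x ^ (r i : ℕ) * x ^ (c j : ℕ) ∂μ := by
    ext i j
    simp only [Matrix.submatrix_apply, hankelMatrix_apply, hmoment, moment, pow_add,
      Matrix.of_apply]
  rw [minor_eq]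
  refine det_integral_mul_nonneg_of_ae (fun i j => by simpa only [pow_add] using hμ (r i + c j)) ?_
  have nodes_nonneg : ∀ᵐ x ∂Measure.pi (fun _ : Fin p => μ), ∀ i, 0 ≤ x i :=
    ae_all_iff.2 fun i => (Measure.quasiMeasurePreserving_eval _ i).ae (mem_ae_iff.2 hsupp)
  exact nodes_nonneg.mono fun x hx => det_mul_det_generalizedVandermonde_nonneg hx
    (Fin.val_strictMono.comp hr) (Fin.val_strictMono.comp hc)

theorem totallyNonneg_hankelMatrix_of_tendsto {α : Type*} {l : Filter α} [l.NeBot]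
    {t : α → ℕ → ℝ} {s : ℕ → ℝ} {n : ℕ} (ht : ∀ᶠ a in l, t a ∈ momentSet (Ici 0))
    (hlim : ∀ i j : Fin n, Tendsto (fun a => t a (i + j)) l (nhds (s (i + j)))) :
    TotallyNonneg (hankelMatrix s n) :=
  totallyNonneg_of_tendsto (A := fun a => hankelMatrix (t a) n)
    (ht.mono fun _ ha => totallyNonneg_hankelMatrix_of_mem_momentSet ha n)
    (tendsto_pi_nhds.2 fun i => tendsto_pi_nhds.2 fun j => hlim i j)

end MomentHankel

section MomentSequences

variable {K : Set ℝ} {s t : ℕ → ℝ}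

theorem nonneg_of_mem_momentSet (hs : s ∈ momentSet (Ici 0)) (k : ℕ) : 0 ≤ s k := by
  obtain ⟨μ, -, hsupp, hmoment⟩ := hs
  rw [hmoment]
  refine integral_nonneg_of_ae ?_
  filter_upwards [show ∀ᵐ x ∂μ, x ∈ Ici (0 : ℝ) from mem_ae_iff.2 hsupp] with x hx
  exact pow_nonneg hx k

theorem const_mul_mem_momentSet {c : ℝ} (hc : 0 ≤ c) (hs : s ∈ momentSet K) :
    (fun k => c * s k) ∈ momentSet K := by
  obtain ⟨μ, hμ, hsupp, hmoment⟩ := hs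
  refine ⟨ENNReal.ofReal c • μ, fun k => (hμ k).smul_measure ENNReal.ofReal_ne_top, ?_, fun k => ?_⟩
  · rw [Measure.smul_apply, hsupp, smul_zero]
  · simp only [hmoment, moment, integral_smul_measure, ENNReal.toReal_ofReal hc, smul_eq_mul]

theorem add_mem_momentSet (hs : s ∈ momentSet K) (ht : t ∈ momentSet K) :
    (fun k => s k + t k) ∈ momentSet K := by
  obtain ⟨μ, hμ, hμsupp, hμmoment⟩ := hs
  obtain ⟨ν, hν, hνsupp, hνmoment⟩ := ht
  refine ⟨μ + ν, fun k => (hμ k).add_measure (hν k), ?_, fun k => ?_⟩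
  · rw [Measure.add_apply, hμsupp, hνsupp, add_zero]
  · simp only [hμmoment, hνmoment, moment, integral_add_measure (hμ k) (hν k)]

theorem pow_mem_momentSet {x : ℝ} (hx : x ∈ K) : (fun k => x ^ k) ∈ momentSet K := by
  refine ⟨Measure.dirac x, fun k => integrable_dirac (by simp), ?_, fun k => ?_⟩
  · simpa using hx
  · rw [moment, integral_dirac]

theorem sum_mem_momentSet {ι : Type*} (S : Finset ι) {u : ι → ℕ → ℝ}
    (hu : ∀ i ∈ S, u i ∈ momentSet K) : (fun k => ∑ i ∈ S, u i k) ∈ momentSet K := by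
  classical
  induction S using Finset.induction_on with
  | empty => exact ⟨0, fun k => integrable_zero_measure, rfl, fun k => by simp [moment]⟩
  | insert i S hi ih =>
    simp_rw [Finset.sum_insert hi]
    exact add_mem_momentSet (hu i (Finset.mem_insert_self i S))
      (ih fun j hj => hu j (Finset.mem_insert_of_mem hj))

theorem mul_mem_momentSet (hK : MeasurableSet K) (hmul : ∀ x ∈ K, ∀ y ∈ K, x * y ∈ K)
    (hs : s ∈ momentSet K) (ht : t ∈ momentSet K) : (fun k => s k * t k) ∈ momentSet K := by
  obtain ⟨μ, hμ, hμsupp, hμmoment⟩ := hs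
  obtain ⟨ν, hν, hνsupp, hνmoment⟩ := ht
  have := hμ.isFiniteMeasure
  have := hν.isFiniteMeasure
  have hmeas : Measurable fun z : ℝ × ℝ => z.1 * z.2 := by fun_prop
  refine ⟨μ.mconv ν, fun k => ?_, ?_, fun k => ?_⟩
  · rw [Measure.mconv, integrable_map_measure (by fun_prop) hmeas.aemeasurable]
    simpa only [Function.comp_def, mul_pow] using (hμ k).mul_prod (hν k)
  · rw [← mem_ae_iff]
    refine (ae_map_iff hmeas.aemeasurable hK).2 ?_
    filter_upwards [Measure.quasiMeasurePreserving_fst.ae (mem_ae_iff.2 hμsupp),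
      Measure.quasiMeasurePreserving_snd.ae (mem_ae_iff.2 hνsupp)] with z hz₁ hz₂
    exact hmul _ hz₁ _ hz₂
  · simp only [hμmoment, hνmoment, moment, Measure.mconv]
    rw [integral_map hmeas.aemeasurable (by fun_prop)]
    simp only [mul_pow]
    exact (integral_prod_mul (fun x => x ^ k) (fun y => y ^ k)).symm

theorem pow_comp_mem_momentSet (hK : MeasurableSet K) (hmul : ∀ x ∈ K, ∀ y ∈ K, x * y ∈ K)
    (hone : 1 ∈ K) (hs : s ∈ momentSet K) (n : ℕ) : (fun k => s k ^ n) ∈ momentSet K := by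
  induction n with
  | zero => simpa using pow_mem_momentSet hone
  | succ n ih => simpa only [pow_succ] using mul_mem_momentSet hK hmul ih hs

theorem integrable_sum_measure_of_summable {α ι : Type*} [MeasurableSpace α] [Countable ι]
    {μ : ι → Measure α} {f : α → ℝ} (hf : ∀ i, Integrable f (μ i)) (hpos : ∀ i, 0 ≤ᵐ[μ i] f)
    (hsum : Summable fun i => ∫ x, f x ∂μ i) : Integrable f (Measure.sum μ) := by
  refine ⟨aestronglyMeasurable_sum_measure_iff.2 fun i => (hf i).1, ?_⟩
  have lintegral_eq (i : ι) : ∫⁻ x, ‖f x‖ₑ ∂μ i = ENNReal.ofReal (∫ x, f x ∂μ i) := by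
    rw [ofReal_integral_eq_lintegral_ofReal (hf i) (hpos i)]
    refine lintegral_congr_ae ((hpos i).mono fun x hx => ?_)
    exact Real.enorm_of_nonneg hx
  rw [HasFiniteIntegral, lintegral_sum_measure]
  simp_rw [lintegral_eq]
  rw [← ENNReal.ofReal_tsum_of_nonneg (fun i => integral_nonneg_of_ae (hpos i)) hsum]
  exact ENNReal.ofReal_lt_top

theorem mem_momentSet_of_hasSum {ι : Type*} [Countable ι] {u : ι → ℕ → ℝ}
    (hu : ∀ i, u i ∈ momentSet (Ici 0)) (hsum : ∀ k, HasSum (fun i => u i k) (s k)) :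
    s ∈ momentSet (Ici 0) := by
  choose μ hμ hsupp hmoment using hu
  have hae (i : ι) (k : ℕ) : 0 ≤ᵐ[μ i] fun x => x ^ k := by
    filter_upwards [show ∀ᵐ x ∂μ i, x ∈ Ici (0 : ℝ) from mem_ae_iff.2 (hsupp i)] with x hx
    exact pow_nonneg hx k
  have hint : IsAdmissible (Measure.sum μ) := fun k =>
    integrable_sum_measure_of_summable (fun i => hμ i k) (fun i => hae i k)
      (by simpa only [hmoment, moment] using (hsum k).summable)
  refine ⟨Measure.sum μ, hint, Measure.sum_apply_eq_zero.2 hsupp, fun k => ?_⟩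
  refine (hsum k).unique ?_
  simpa only [hmoment, moment] using hasSum_integral_measure (hint k)

theorem AbsolutelyMonotonicEntire.comp_mem_momentSet {G : ℝ → ℝ} (hG : AbsolutelyMonotonicEntire G)
    (hs : s ∈ momentSet (Ici 0)) : (fun k => G (s k)) ∈ momentSet (Ici 0) := by
  obtain ⟨c, hc, hG⟩ := hG
  exact mem_momentSet_of_hasSum (fun n => const_mul_mem_momentSet (hc n) <|
    pow_comp_mem_momentSet measurableSet_Ici (fun _ hx _ hy => mem_Ici.2 (mul_nonneg hx hy))
    (mem_Ici.2 zero_le_one) hs n)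
    fun k => hG (s k)

end MomentSequences

section Quadrature

open Matrix

open scoped ComplexOrder MatrixOrder in
theorem exists_conjTranspose_mul_self_of_posDef {n 𝕜 : Type*} [Fintype n] [DecidableEq n]
    [RCLike 𝕜] {A : Matrix n n 𝕜} (hA : A.PosDef) : ∃ Q : Matrix n n 𝕜, IsUnit Q ∧ A = Qᴴ * Q := by
  obtain ⟨Q, hQ⟩ := CStarAlgebra.nonneg_iff_eq_star_mul_self.1 hA.posSemidef.nonneg
  refine ⟨Q, ?_, hQ⟩
  have hunit := hA.isUnit
  rw [hQ, isUnit_iff_isUnit_det, det_mul] at hunit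
  exact (isUnit_iff_isUnit_det Q).2 (isUnit_of_mul_isUnit_right hunit)

open scoped ComplexOrder in
theorem exists_simultaneous_diagonalization {n 𝕜 : Type*} [Fintype n] [DecidableEq n] [RCLike 𝕜]
    {A B : Matrix n n 𝕜} (hA : A.PosDef) (hB : B.PosSemidef) :
    ∃ (P : Matrix n n 𝕜) (l : n → ℝ), IsUnit P ∧ (∀ k, 0 ≤ l k) ∧ A = Pᴴ * P ∧
      B = Pᴴ * Matrix.diagonal (RCLike.ofReal ∘ l : n → 𝕜) * P := by
  obtain ⟨Q, hQ, rfl⟩ := exists_conjTranspose_mul_self_of_posDef hA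
  have hQinv : Q⁻¹ * Q = 1 := nonsing_inv_mul _ ((isUnit_iff_isUnit_det Q).1 hQ)
  have hC : ((Q⁻¹)ᴴ * B * Q⁻¹).PosSemidef := hB.conjTranspose_mul_mul_same _
  set U : Matrix n n 𝕜 := ↑hC.1.eigenvectorUnitary
  have hU : U * Uᴴ = 1 := Unitary.coe_mul_star_self hC.1.eigenvectorUnitary
  have hspectral : (Q⁻¹)ᴴ * B * Q⁻¹ = U * Matrix.diagonal (RCLike.ofReal ∘ hC.1.eigenvalues) * Uᴴ :=
    hC.1.spectral_theorem
  refine ⟨Uᴴ * Q, hC.1.eigenvalues, ?_, hC.eigenvalues_nonneg, ?_, ?_⟩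
  · exact (IsUnit.of_mul_eq_one _ (mul_eq_one_comm.1 hU)).mul hQ
  · rw [conjTranspose_mul, conjTranspose_conjTranspose, mul_assoc, ← mul_assoc U, hU, one_mul]
  · calc B = (Q⁻¹ * Q)ᴴ * B * (Q⁻¹ * Q) := by
          rw [hQinv, conjTranspose_one, one_mul, mul_one]
      _ = Qᴴ * ((Q⁻¹)ᴴ * B * Q⁻¹) * Q := by simp only [conjTranspose_mul, mul_assoc]
      _ = Qᴴ * (U * Matrix.diagonal (RCLike.ofReal ∘ hC.1.eigenvalues) * Uᴴ) * Q :=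
          congrArg (Qᴴ * · * Q) hspectral
      _ = _ := by
          rw [conjTranspose_mul, conjTranspose_conjTranspose]
          simp only [mul_assoc]

variable {s : ℕ → ℝ} {m : ℕ}

-- In coordinates diagonalizing both forms, passing from column `j` to column `j + 1` multiplies the
-- `k`-th row by `l k`; hence the rows are geometric and the `l k` are the nodes.
theorem exists_mem_momentSet_of_posDef_of_posSemidef_shift (hs : (hankelMatrix s (m + 1)).PosDef)
    (hshift : (hankelMatrix (fun k => s (k + 1)) (m + 1)).PosSemidef) :
    ∃ t ∈ momentSet (Ici 0), hankelMatrix t (m + 1) = hankelMatrix s (m + 1) := by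
  obtain ⟨P, l, hP, hl, hs_eq, hshift_eq⟩ := exists_simultaneous_diagonalization hs hshift
  have column_succ (j : Fin m) : (fun k => P k j.succ) = fun k => l k * P k j.castSucc := by
    refine mulVec_injective_of_isUnit ((isUnit_conjTranspose P).2 hP) (funext fun i => ?_)
    have hentry : hankelMatrix s (m + 1) i j.succ =
        hankelMatrix (fun k => s (k + 1)) (m + 1) i j.castSucc := by
      simp [add_assoc]
    rw [hs_eq, hshift_eq, mul_assoc, mul_apply, mul_apply] at hentry
    simpa [mulVec, dotProduct, diagonal_mul] using hentry
  have row_geometric (k : Fin (m + 1)) (j : Fin (m + 1)) : P k j = P k 0 * l k ^ (j : ℕ) := by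
    induction j using Fin.induction with
    | zero => simp
    | succ j ih =>
      rw [congrFun (column_succ j) k, ih, Fin.val_succ, Fin.val_castSucc]
      ring
  refine ⟨fun i => ∑ k, P k 0 ^ 2 * l k ^ i, sum_mem_momentSet _ fun k _ =>
    const_mul_mem_momentSet (sq_nonneg _) (pow_mem_momentSet (hl k)), ?_⟩
  rw [hs_eq]
  ext i j
  simp only [hankelMatrix_apply, mul_apply, conjTranspose_apply, star_trivial, row_geometric _ i,
    row_geometric _ j, pow_add]
  exact Finset.sum_congr rfl fun k _ => by ring

theorem exists_fromBlocks_posSemidef_of_posDef {n : Type*} [Finite n]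
    {A : Matrix n n ℝ} (hA : A.PosDef) (b : Matrix n (Fin 1) ℝ) :
    ∃ d : ℝ, (fromBlocks A b bᴴ (of fun _ _ => d)).PosSemidef := by
  classical
  cases nonempty_fintype n
  let _ := hA.isUnit.invertible
  refine ⟨(bᴴ * A⁻¹ * b) 0 0, (PosDef.fromBlocks₁₁ b _ hA).2 ?_⟩
  convert Matrix.PosSemidef.zero
  ext i j
  simp [Subsingleton.elim i 0, Subsingleton.elim j 0]

theorem hankelMatrix_succ_submatrix_finSumFinEquiv (u : ℕ → ℝ) (m : ℕ) :
    (hankelMatrix u (m + 1)).submatrix finSumFinEquiv finSumFinEquiv =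
      fromBlocks (hankelMatrix u m) (of fun i _ => u (i + m)) (of fun i _ => u (i + m))ᴴ
        (of fun _ _ => u (2 * m)) := by
  ext i j
  rcases i with i | i <;> rcases j with j | j <;> simp [add_comm m, two_mul]

theorem exists_mem_momentSet_of_posDef (hs : (hankelMatrix s (m + 1)).PosDef)
    (hshift : (hankelMatrix (fun k => s (k + 1)) m).PosDef) :
    ∃ t ∈ momentSet (Ici 0), hankelMatrix t (m + 1) = hankelMatrix s (m + 1) := by
  obtain ⟨d, hd⟩ := exists_fromBlocks_posSemidef_of_posDef hshift (of fun i _ => s (i + m + 1))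
  set s' : ℕ → ℝ := Function.update s (2 * m + 1) d
  have hs' (k : ℕ) (hk : k ≤ 2 * m) : s' k = s k := Function.update_of_ne (by omega) _ _
  have hankel_eq : hankelMatrix s' (m + 1) = hankelMatrix s (m + 1) := by
    ext i j
    exact hs' _ (by omega)
  have hshift' : (hankelMatrix (fun k => s' (k + 1)) (m + 1)).PosSemidef := by
    rw [← posSemidef_submatrix_equiv finSumFinEquiv, hankelMatrix_succ_submatrix_finSumFinEquiv]
    convert hd using 1
    congr 1
    · ext i j
      exact hs' _ (by omega)
    · ext i
      exact hs' _ (by omega)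
    · ext _ j
      exact hs' _ (by omega)
    · ext
      exact Function.update_self _ _ _
  rw [← hankel_eq] at hs ⊢
  exact exists_mem_momentSet_of_posDef_of_posSemidef_shift hs hshift'

theorem posDef_hankelMatrix_sum_pow {n : ℕ} {x w : Fin n → ℝ} (hx : Function.Injective x)
    (hw : ∀ i, 0 < w i) : (hankelMatrix (fun k => ∑ i, w i * x i ^ k) n).PosDef := by
  have hfactor : hankelMatrix (fun k => ∑ i, w i * x i ^ k) n =
      (vandermonde x)ᴴ * diagonal w * vandermonde x := by
    ext i j
    rw [hankelMatrix_apply, mul_apply]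
    simp only [mul_diagonal, conjTranspose_apply, star_trivial, vandermonde_apply, pow_add]
    exact Finset.sum_congr rfl fun k _ => by ring
  rw [hfactor]
  refine (PosDef.diagonal hw).conjTranspose_mul_mul_same (mulVec_injective_of_isUnit ?_)
  rw [isUnit_iff_isUnit_det, isUnit_iff_ne_zero]
  exact det_vandermonde_ne_zero_iff.2 hx

theorem exists_posDef_hankelMatrix_and_shift (m : ℕ) : ∃ u : ℕ → ℝ,
    (hankelMatrix u (m + 1)).PosDef ∧ (hankelMatrix (fun k => u (k + 1)) m).PosDef := by
  have hinj : Function.Injective fun i : Fin (m + 1) => (i + 1 : ℝ) := fun i j hij => by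
    simpa [Fin.ext_iff] using hij
  refine ⟨fun k => ∑ i : Fin (m + 1), 1 * (i + 1 : ℝ) ^ k,
    posDef_hankelMatrix_sum_pow hinj fun _ => one_pos, ?_⟩
  have hshift := posDef_hankelMatrix_sum_pow (w := fun i => (i + 1 : ℝ)) hinj fun i => by positivity
  simp only [pow_succ', one_mul]
  exact hshift.submatrix (Fin.castSucc_injective m)

theorem TotallyNonneg.hankelMatrix_shift (hs : TotallyNonneg (hankelMatrix s (m + 1))) :
    TotallyNonneg (hankelMatrix (fun k => s (k + 1)) m) :=
  hs.submatrix Fin.strictMono_castSucc Fin.strictMono_succ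

theorem exists_tendsto_mem_momentSet_of_totallyNonneg {n : ℕ}
    (hs : TotallyNonneg (hankelMatrix s n)) :
    ∃ t : ℝ → ℕ → ℝ, (∀ ε > 0, t ε ∈ momentSet (Ici 0)) ∧
      ∀ i j : Fin n, Tendsto (fun ε => t ε (i + j)) (nhdsWithin 0 (Ioi 0)) (nhds (s (i + j))) := by
  rcases n with _ | m
  · exact ⟨fun _ k => 0 ^ k, fun ε _ => pow_mem_momentSet self_mem_Ici, fun i => i.elim0⟩
  obtain ⟨u, hu, hushift⟩ := exists_posDef_hankelMatrix_and_shift m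
  have perturbation (ε : ℝ) (hε : 0 < ε) : ∃ t ∈ momentSet (Ici 0),
      hankelMatrix t (m + 1) = hankelMatrix (fun k => s k + ε * u k) (m + 1) := by
    refine exists_mem_momentSet_of_posDef ?_ ?_
    · exact PosDef.posSemidef_add
        (hs.posSemidef (isHankelMat_hankelMatrix s _).isHermitian) (hu.smul hε)
    · exact PosDef.posSemidef_add
        (hs.hankelMatrix_shift.posSemidef (isHankelMat_hankelMatrix _ _).isHermitian)
        (hushift.smul hε)
  choose! t ht heq using perturbation
  refine ⟨t, ht, fun i j => ?_⟩
  have hlim : Tendsto (fun ε => s (i + j) + ε * u (i + j)) (nhds 0) (nhds (s (i + j))) := by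
    have hcont : Continuous fun ε => s (i + j) + ε * u (i + j) := by fun_prop
    simpa using hcont.tendsto 0
  refine (hlim.mono_left nhdsWithin_le_nhds).congr' ?_
  filter_upwards [self_mem_nhdsWithin] with ε hε
  exact (congrFun₂ (heq ε hε) i j).symm

theorem IsHankelMat.exists_eq_hankelMatrix {n : ℕ} {A : Matrix (Fin n) (Fin n) ℝ}
    (hA : IsHankelMat A) : ∃ s, A = hankelMatrix s n := by
  rcases n with _ | m
  · exact ⟨0, Subsingleton.elim _ _⟩
  · refine ⟨fun k => A (Fin.ofNat (m + 1) (min k m)) (Fin.ofNat (m + 1) (k - m)), ?_⟩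
    ext i j
    refine hA _ _ _ _ ?_
    rw [Fin.val_ofNat, Fin.val_ofNat, Nat.mod_eq_of_lt (by omega), Nat.mod_eq_of_lt (by omega)]
    omega

end Quadrature

section Sufficiency

variable {F G : ℝ → ℝ} {s : ℕ → ℝ}

theorem AbsolutelyMonotonicEntire.continuous (hG : AbsolutelyMonotonicEntire G) :
    Continuous G := by
  obtain ⟨c, hc, hsum⟩ := hG
  have continuousOn_Icc (r : ℝ) : ContinuousOn G (Icc (-r) r) := by
    rw [show G = fun x => ∑' n, c n * x ^ n from funext fun x => (hsum x).tsum_eq.symm]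
    refine continuousOn_tsum (fun n => by fun_prop) (hsum r).summable fun n x hx => ?_
    rw [norm_mul, norm_pow, Real.norm_of_nonneg (hc n)]
    have hxr : ‖x‖ ≤ r := abs_le.2 hx
    have := hc n
    gcongr
  refine continuous_iff_continuousAt.2 fun x => (continuousOn_Icc (|x| + 1)).continuousAt ?_
  exact Icc_mem_nhds (by linarith [neg_abs_le x]) (by linarith [le_abs_self x])

theorem AbsolutelyMonotonicEntire.monotoneOn (hG : AbsolutelyMonotonicEntire G) :
    MonotoneOn G (Ici 0) := by
  obtain ⟨c, hc, hsum⟩ := hG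
  exact fun x hx y _ hxy => hasSum_le
    (fun n => mul_le_mul_of_nonneg_left (pow_le_pow_left₀ hx hxy n) (hc n)) (hsum x) (hsum y)

theorem AbsolutelyMonotonicEntire.totallyNonneg_hankelMatrix_comp {n : ℕ}
    (hG : AbsolutelyMonotonicEntire G) (hs : TotallyNonneg (hankelMatrix s n)) :
    TotallyNonneg (hankelMatrix (fun k => G (s k)) n) := by
  obtain ⟨t, ht, hlim⟩ := exists_tendsto_mem_momentSet_of_totallyNonneg hs
  refine totallyNonneg_hankelMatrix_of_tendsto (t := fun ε k => G (t ε k)) ?_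
    fun i j => (hG.continuous.tendsto _).comp (hlim i j)
  filter_upwards [self_mem_nhdsWithin] with ε hε
  exact hG.comp_mem_momentSet (ht ε hε)

theorem AbsolutelyMonotonicEntire.apply_zero_le_of_eqOn_Ioi (hG : AbsolutelyMonotonicEntire G)
    (hFG : EqOn F G (Ioi 0)) {L : ℝ} (hlim : Tendsto F (nhdsWithin 0 (Ioi 0)) (nhds L))
    (hL : F 0 ≤ L) {x : ℝ} (hx : 0 ≤ x) : F 0 ≤ F x := by
  rcases hx.eq_or_lt with rfl | hx
  · exact le_rfl
  have hlimG : Tendsto F (nhdsWithin 0 (Ioi 0)) (nhds (G 0)) :=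
    (hG.continuous.tendsto 0 |>.mono_left nhdsWithin_le_nhds).congr'
      (hFG.symm.eventuallyEq_of_mem self_mem_nhdsWithin)
  calc F 0 ≤ L := hL
    _ = G 0 := tendsto_nhds_unique hlim hlimG
    _ ≤ G x := hG.monotoneOn self_mem_Ici hx.le hx.le
    _ = F x := (hFG hx).symm

theorem TotallyNonneg.sq_le_mul_of_hankelMatrix {m k : ℕ}
    (hs : TotallyNonneg (hankelMatrix s (m + 1))) (hk : k + 2 ≤ 2 * m) :
    s (k + 1) ^ 2 ≤ s k * s (k + 2) := by
  obtain ⟨a, b, ha, hb, rfl⟩ : ∃ a b, a < m ∧ b < m ∧ a + b = k :=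
    ⟨min k (m - 1), k - min k (m - 1), by omega, by omega, by omega⟩
  have hminor := hs 2 ![⟨a, by omega⟩, ⟨a + 1, by omega⟩] ![⟨b, by omega⟩, ⟨b + 1, by omega⟩]
    (by simp [Fin.strictMono_iff_lt_succ]) (by simp [Fin.strictMono_iff_lt_succ])
  simp only [Matrix.det_fin_two, Matrix.submatrix_apply, hankelMatrix_apply, Matrix.cons_val_zero,
    Matrix.cons_val_one, ← add_assoc, add_right_comm a 1 b] at hminor
  linarith

theorem eq_zero_of_sq_le_mul {N k j : ℕ} (hs : ∀ i, i + 2 ≤ N → s (i + 1) ^ 2 ≤ s i * s (i + 2))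
    (hk : k ≤ N) (hsk : s k = 0) (hj : 0 < j) (hjN : j < N) : s j = 0 := by
  have middle_eq_zero (i : ℕ) (hi : i + 2 ≤ N) (hprod : s i * s (i + 2) = 0) : s (i + 1) = 0 :=
    pow_eq_zero_iff two_ne_zero |>.1 (le_antisymm (hprod ▸ hs i hi) (sq_nonneg _))
  rcases le_total k j with hkj | hjk
  · induction j, hkj using Nat.le_induction with
    | base => exact hsk
    | succ j hkj ih =>
      rcases hkj.eq_or_lt with rfl | hkj
      · exact middle_eq_zero k hjN (by rw [hsk, zero_mul])
      · exact middle_eq_zero j hjN (by rw [ih (by omega) (by omega), zero_mul])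
  · induction hjk using Nat.decreasingInduction with
    | self => exact hsk
    | of_succ j hjk ih =>
      obtain ⟨i, rfl⟩ := Nat.exists_eq_add_one_of_ne_zero hj.ne'
      rcases Nat.lt_or_ge (i + 2) N with hi | hi
      · exact middle_eq_zero i hi.le (by rw [ih (by omega) hi, mul_zero])
      · exact middle_eq_zero i (by omega) (by rw [show i + 2 = k by omega, hsk, mul_zero])

theorem eq_zero_of_mem_momentSet {k j : ℕ} (hs : s ∈ momentSet (Ici 0)) (hsk : s k = 0)
    (hj : 0 < j) : s j = 0 :=
  eq_zero_of_sq_le_mul (N := 2 * (k + j)) (fun _ hi =>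
    (totallyNonneg_hankelMatrix_of_mem_momentSet hs _).sq_le_mul_of_hankelMatrix hi)
    (by omega) hsk hj (by omega)

-- The last summand is the limit as `ε → 0` of the moments `β * ε ^ (2 * m) * ε⁻¹ ^ k` of a point
-- mass that escapes to infinity.
theorem totallyNonneg_hankelMatrix_endpoints (m : ℕ) {p α β : ℝ} (hp : 0 ≤ p) (hα : 0 ≤ α)
    (hβ : 0 ≤ β) :
    TotallyNonneg (hankelMatrix (fun k => p + α * 0 ^ k + β * 0 ^ (2 * m - k)) (m + 1)) := by
  refine totallyNonneg_hankelMatrix_of_tendsto (l := nhdsWithin (0 : ℝ) (Ioi 0))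
    (t := fun ε k => p * 1 ^ k + α * 0 ^ k + β * ε ^ (2 * m) * ε⁻¹ ^ k) ?_ fun i j => ?_
  · filter_upwards [self_mem_nhdsWithin] with ε hε
    have hε : 0 < ε := hε
    exact add_mem_momentSet (add_mem_momentSet
      (const_mul_mem_momentSet hp (pow_mem_momentSet (mem_Ici.2 zero_le_one)))
      (const_mul_mem_momentSet hα (pow_mem_momentSet self_mem_Ici)))
      (const_mul_mem_momentSet (by positivity) (pow_mem_momentSet (inv_nonneg.2 hε.le)))
  · have hcont : Continuous fun ε : ℝ =>
        p + α * 0 ^ ((i : ℕ) + j) + β * ε ^ (2 * m - ((i : ℕ) + j)) := by fun_prop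
    refine (hcont.tendsto 0 |>.mono_left nhdsWithin_le_nhds).congr' ?_
    filter_upwards [self_mem_nhdsWithin] with ε hε
    rw [one_pow, mul_one, pow_sub₀ _ (ne_of_gt hε) (by omega), inv_pow, mul_assoc]

theorem totallyNonneg_hankelMatrix_comp_of_eq_zero {m k : ℕ} (hF0 : 0 ≤ F 0)
    (hF : ∀ x, 0 ≤ x → F 0 ≤ F x) (hs : TotallyNonneg (hankelMatrix s (m + 1)))
    (hk : k ≤ 2 * m) (hsk : s k = 0) :
    TotallyNonneg (hankelMatrix (fun k => F (s k)) (m + 1)) := by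
  have interior_eq_zero (j : ℕ) (hj : 0 < j) (hjm : j < 2 * m) : s j = 0 :=
    eq_zero_of_sq_le_mul (fun _ => hs.sq_le_mul_of_hankelMatrix) hk hsk hj hjm
  have hfirst : 0 ≤ s 0 := hs.apply_nonneg 0 0
  have hlast : 0 ≤ s (2 * m) := by
    simpa [two_mul] using hs.apply_nonneg (Fin.last m) (Fin.last m)
  have hendpoints := totallyNonneg_hankelMatrix_endpoints m hF0
    (sub_nonneg.2 (hF _ hfirst)) (sub_nonneg.2 (hF _ hlast))
  convert hendpoints using 1
  ext i j
  simp only [hankelMatrix_apply]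
  rcases Nat.eq_zero_or_pos m with rfl | hm
  · obtain rfl : k = 0 := by omega
    simp [Fin.fin_one_eq_zero i, Fin.fin_one_eq_zero j, hsk]
  obtain hij | hij | ⟨hpos, hlt⟩ : (i + j : ℕ) = 0 ∨ (i + j : ℕ) = 2 * m ∨
      0 < (i + j : ℕ) ∧ (i + j : ℕ) < 2 * m := by omega
  · simp [hij, hm.ne']
  · simp [hij, hm.ne']
  · rw [interior_eq_zero _ hpos hlt, zero_pow hpos.ne', zero_pow (Nat.sub_pos_of_lt hlt).ne']
    ring

theorem totallyNonneg_hankelMatrix_comp_of_eqOn_Ioi {n : ℕ} (hG : AbsolutelyMonotonicEntire G)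
    (hFG : EqOn F G (Ioi 0)) (hF0 : 0 ≤ F 0) (hF : ∀ x, 0 ≤ x → F 0 ≤ F x)
    (hs : TotallyNonneg (hankelMatrix s n)) :
    TotallyNonneg (hankelMatrix (fun k => F (s k)) n) := by
  by_cases hzero : ∃ i j : Fin n, s (i + j) = 0
  · obtain ⟨i, j, hij⟩ := hzero
    obtain ⟨m, rfl⟩ := Nat.exists_eq_add_one_of_ne_zero (Fin.pos i).ne'
    exact totallyNonneg_hankelMatrix_comp_of_eq_zero hF0 hF hs (by omega) hij
  · push Not at hzero
    convert hG.totallyNonneg_hankelMatrix_comp hs using 1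
    ext i j
    exact hFG ((hs.apply_nonneg i j).lt_of_ne' (hzero i j))

theorem comp_mem_momentSet_of_eqOn_Ioi (hG : AbsolutelyMonotonicEntire G)
    (hFG : EqOn F G (Ioi 0)) (hF0 : 0 ≤ F 0) (hF : ∀ x, 0 ≤ x → F 0 ≤ F x)
    (hs : s ∈ momentSet (Ici 0)) :
    (fun k => F (s k)) ∈ momentSet (Ici 0) := by
  by_cases hzero : ∃ k, s k = 0
  · obtain ⟨k, hsk⟩ := hzero
    convert add_mem_momentSet
      (const_mul_mem_momentSet hF0 (pow_mem_momentSet (mem_Ici.2 zero_le_one)))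
      (const_mul_mem_momentSet (sub_nonneg.2 (hF _ (nonneg_of_mem_momentSet hs 0)))
        (pow_mem_momentSet self_mem_Ici)) using 2 with j
    rcases Nat.eq_zero_or_pos j with rfl | hj
    · simp
    · simp [eq_zero_of_mem_momentSet hs hsk hj, hj.ne']
  · push Not at hzero
    convert hG.comp_mem_momentSet hs using 2 with k
    exact hFG ((nonneg_of_mem_momentSet hs k).lt_of_ne' (hzero k))

end Sufficiency

section RieszFunctional

open Polynomial

/-- The Riesz functional of a sequence `s`: the linear functional on polynomials with
`X ^ k ↦ s k`. It turns positivity of all Hankel matrices of `s` into positivity on squares. -/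
noncomputable def rieszFunctional (s : ℕ → ℝ) : ℝ[X] →ₗ[ℝ] ℝ :=
  Polynomial.lsum fun k => s k • LinearMap.id

theorem rieszFunctional_apply (s : ℕ → ℝ) (q : ℝ[X]) :
    rieszFunctional s q = ∑ k ∈ q.support, q.coeff k * s k := by
  simp [rieszFunctional, Polynomial.sum_def, mul_comm]

theorem rieszFunctional_monomial (s : ℕ → ℝ) (k : ℕ) (r : ℝ) :
    rieszFunctional s (monomial k r) = r * s k := by
  simp [rieszFunctional, mul_comm]

theorem rieszFunctional_sq_nonneg {s : ℕ → ℝ} (hs : ∀ n, (hankelMatrix s n).PosSemidef)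
    (p : ℝ[X]) : 0 ≤ rieszFunctional s (p ^ 2) := by
  have hexpand : rieszFunctional s (p ^ 2) =
      ∑ i : Fin (p.natDegree + 1), ∑ j : Fin (p.natDegree + 1),
        p.coeff i * (s (i + j) * p.coeff j) := by
    conv_lhs => rw [p.as_sum_range, Finset.sum_range, sq, Finset.sum_mul_sum]
    simp only [map_sum, monomial_mul_monomial, rieszFunctional_monomial]
    exact Finset.sum_congr rfl fun i _ => Finset.sum_congr rfl fun j _ => by ring
  have hform := (hs (p.natDegree + 1)).dotProduct_mulVec_nonneg fun i => p.coeff i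
  rw [hexpand]
  simpa only [dotProduct, Matrix.mulVec, hankelMatrix_apply, Pi.star_apply, star_trivial,
    Finset.mul_sum] using hform

theorem rieszFunctional_pow (x : ℝ) (q : ℝ[X]) : rieszFunctional (fun k => x ^ k) q = q.eval x := by
  rw [rieszFunctional_apply, eval_eq_sum, Polynomial.sum_def]

theorem rieszFunctional_mul_const (s : ℕ → ℝ) (r : ℝ) (q : ℝ[X]) :
    rieszFunctional (fun k => s k * r) q = rieszFunctional s q * r := by
  simp only [rieszFunctional_apply, Finset.sum_mul, mul_assoc]

theorem iteratedDeriv_rieszFunctional {f : ℕ → ℝ → ℝ} {n : ℕ} {t : ℝ}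
    (hf : ∀ k, ContDiffAt ℝ n (f k) t) (q : ℝ[X]) :
    iteratedDeriv n (fun t => rieszFunctional (fun k => f k t) q) t =
      rieszFunctional (fun k => iteratedDeriv n (f k) t) q := by
  simp only [rieszFunctional_apply]
  rw [iteratedDeriv_fun_sum fun k _ => contDiffAt_const.mul (hf k)]
  simp only [iteratedDeriv_const_mul_field]

theorem rieszFunctional_integral {α : Type*} {_ : MeasurableSpace α} {μ : Measure α}
    {f : ℕ → α → ℝ} (hf : ∀ k, Integrable (f k) μ) (q : ℝ[X]) :
    rieszFunctional (fun k => ∫ z, f k z ∂μ) q = ∫ z, rieszFunctional (fun k => f k z) q ∂μ := by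
  simp only [rieszFunctional_apply]
  rw [integral_finsetSum _ fun k _ => (hf k).const_mul _]
  simp only [integral_const_mul]

end RieszFunctional

section SmoothTestFunctions

open Polynomial

open scoped Nat in
theorem iteratedDeriv_nonneg_of_eventually_nonneg {f : ℝ → ℝ} {x : ℝ} {n : ℕ}
    (hf : ContDiff ℝ n f) (hzero : ∀ k < n, iteratedDeriv k f x = 0)
    (hnonneg : ∀ᶠ t in nhdsWithin x (Ioi x), 0 ≤ f t) : 0 ≤ iteratedDeriv n f x := by
  have htaylor (t : ℝ) :
      taylorWithinEval f n univ x t = (n ! : ℝ)⁻¹ * (t - x) ^ n * iteratedDeriv n f x := by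
    rw [taylor_within_apply, Finset.sum_range_succ, Finset.sum_eq_zero fun k hk => ?_, zero_add]
    · rw [iteratedDerivWithin_univ, smul_eq_mul]
    · rw [iteratedDerivWithin_univ, hzero k (Finset.mem_range.1 hk), smul_zero]
  have hlim : Tendsto (fun t => f t / (t - x) ^ n) (nhdsWithin x (Ioi x))
      (nhds ((n ! : ℝ)⁻¹ * iteratedDeriv n f x)) := by
    have hremainder := (taylor_isLittleO_univ (x₀ := x) hf).tendsto_div_nhds_zero.add_const
      ((n ! : ℝ)⁻¹ * iteratedDeriv n f x)
    rw [zero_add] at hremainder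
    refine (hremainder.mono_left nhdsWithin_le_nhds).congr' ?_
    filter_upwards [self_mem_nhdsWithin] with t ht
    have hpow : (t - x) ^ n ≠ 0 := pow_ne_zero _ (sub_pos.2 ht).ne'
    rw [htaylor]
    field_simp
    ring
  have hquotient : 0 ≤ (n ! : ℝ)⁻¹ * iteratedDeriv n f x := by
    refine ge_of_tendsto hlim ?_
    filter_upwards [hnonneg, self_mem_nhdsWithin] with t ht hxt
    exact div_nonneg ht (pow_nonneg (sub_pos.2 hxt).le n)
  exact nonneg_of_mul_nonneg_right hquotient (by positivity)

theorem iteratedDeriv_comp_const_add_mul {g : ℝ → ℝ} {n : ℕ} (hg : ContDiff ℝ n g) (a b : ℝ) :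
    iteratedDeriv n (fun t => g (a + t * b)) 0 = b ^ n * iteratedDeriv n g a := by
  have hscale := congrFun (iteratedDeriv_comp_const_mul (f := fun y => g (a + y)) (n := n)
    (hg.comp (by fun_prop)) b) 0
  simp only [mul_comm b] at hscale
  rw [hscale, iteratedDeriv_comp_const_add]
  simp

-- Testing against the square of `p = ∏ k < n, (X - 2 ^ k)` kills the derivatives of order less than
-- `n` of `t ↦ g (a + t * 2 ^ k)`, so that the first surviving Taylor term has to be non-negative.
theorem iteratedDeriv_nonneg_of_rieszFunctional_nonneg {g : ℝ → ℝ} {a : ℝ} {n : ℕ}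
    (hg : ContDiff ℝ n g)
    (hpos : ∀ t, 0 ≤ t → ∀ p : ℝ[X], 0 ≤ rieszFunctional (fun k => g (a + t * 2 ^ k)) (p ^ 2)) :
    0 ≤ iteratedDeriv n g a := by
  set p : ℝ[X] := ∏ k ∈ Finset.range n, (X - C (2 ^ k))
  set φ : ℝ → ℝ := fun t => rieszFunctional (fun k => g (a + t * 2 ^ k)) (p ^ 2)
  have hsmooth (k : ℕ) : ContDiff ℝ n fun t => g (a + t * 2 ^ k) := hg.comp (by fun_prop)
  have hφ : ContDiff ℝ n φ := by
    simp only [φ, rieszFunctional_apply]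
    exact ContDiff.sum fun k _ => contDiff_const.mul (hsmooth k)
  have hderiv (m : ℕ) (hm : m ≤ n) :
      iteratedDeriv m φ 0 = p.eval (2 ^ m) ^ 2 * iteratedDeriv m g a := by
    have hmn : (m : WithTop ℕ∞) ≤ n := by exact_mod_cast hm
    rw [iteratedDeriv_rieszFunctional fun k => ((hsmooth k).of_le hmn).contDiffAt]
    simp only [iteratedDeriv_comp_const_add_mul (hg.of_le hmn), pow_right_comm (2 : ℝ) _ m]
    rw [rieszFunctional_mul_const, rieszFunctional_pow, eval_pow]
  have hroot (m : ℕ) (hm : m < n) : p.eval (2 ^ m) = 0 := by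
    rw [eval_prod]
    exact Finset.prod_eq_zero (Finset.mem_range.2 hm) (by simp)
  have hnotroot : p.eval (2 ^ n) ≠ 0 := by
    rw [eval_prod, Finset.prod_ne_zero_iff]
    intro k hk
    rw [eval_sub, eval_X, eval_C, sub_ne_zero, (pow_right_injective₀ two_pos (by norm_num)).ne_iff]
    exact (Finset.mem_range.1 hk).ne'
  have hnonneg := iteratedDeriv_nonneg_of_eventually_nonneg hφ
    (fun m hm => by rw [hderiv m hm.le, hroot m hm, zero_pow two_ne_zero, zero_mul])
    (eventually_nhdsWithin_of_forall fun t ht => hpos t (le_of_lt ht) p)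
  rw [hderiv n le_rfl] at hnonneg
  exact nonneg_of_mul_nonneg_right hnonneg (by positivity)

end SmoothTestFunctions

section Bernstein

-- Both sides expand `(x • E + (1 - x) • 1) ^ N = (x • Δ + 1) ^ N`, where `E = Δ + 1` is the shift.
theorem sum_choose_mul_shift_eq_sum_choose_mul_fwdDiff_iter (f : ℝ → ℝ) (h x y : ℝ) (N : ℕ) :
    ∑ k ∈ Finset.range (N + 1), (N.choose k : ℝ) * x ^ k * (1 - x) ^ (N - k) * f (y + k * h) =
      ∑ k ∈ Finset.range (N + 1), (N.choose k : ℝ) * x ^ k * (fwdDiff h)^[k] f y := by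
  let Δ : Module.End ℝ (ℝ → ℝ) :=
    { toFun := fwdDiff h
      map_add' := fwdDiff_add h
      map_smul' := fwdDiff_const_smul h }
  have diff_pow (k : ℕ) : (Δ ^ k) f y = (fwdDiff h)^[k] f y := by
    rw [Module.End.pow_apply]
    rfl
  have shift_pow (k : ℕ) : ((Δ + 1) ^ k) f y = f (y + k * h) := by
    rw [← nsmul_eq_mul, ← fwdDiff_aux.shiftₗ_pow_apply h f, Module.End.pow_apply,
      Module.End.pow_apply]
    rfl
  have hexpand : (x • (Δ + 1) + (1 - x) • (1 : Module.End ℝ (ℝ → ℝ))) ^ N = (x • Δ + 1) ^ N := by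
    congr 1
    module
  rw [((Commute.one_right _).smul_right _).add_pow, (Commute.one_right _).add_pow] at hexpand
  have heval := congrFun (LinearMap.congr_fun hexpand f) y
  simp only [LinearMap.sum_apply, Finset.sum_apply, smul_pow, one_pow, mul_one, mul_smul_comm,
    ← nsmul_eq_mul', LinearMap.smul_apply, Pi.smul_apply, shift_pow, diff_pow] at heval
  convert heval using 2 <;> simp only [nsmul_eq_mul, smul_eq_mul] <;> ring

open Polynomial

/-- The polynomial `∑ k, (N choose k) * Δ^k f 0 * (X / b) ^ k`, with differences of step `b / N`:
the `N`-th Bernstein approximation of `f` on `[0, b]`, written in Newton form so that the signs of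
its coefficients are visible. -/
noncomputable def bernsteinNewton (f : ℝ → ℝ) (b : ℝ) (N : ℕ) : ℝ[X] :=
  ∑ k ∈ Finset.range (N + 1), monomial k ((N.choose k : ℝ) * (fwdDiff (b / N))^[k] f 0 / b ^ k)

theorem bernsteinNewton_coeff_nonneg {f : ℝ → ℝ}
    (hf : ∀ (n : ℕ) (h : ℝ), 0 ≤ h → 0 ≤ (fwdDiff h)^[n] f 0) {b : ℝ} (hb : 0 ≤ b) (N k : ℕ) :
    0 ≤ (bernsteinNewton f b N).coeff k := by
  simp only [bernsteinNewton, finsetSum_coeff, coeff_monomial]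
  refine Finset.sum_nonneg fun i _ => ?_
  have := hf i (b / N) (by positivity)
  split_ifs <;> positivity

theorem eval_bernsteinNewton (f : C(unitInterval, ℝ)) {g : ℝ → ℝ} {b : ℝ} (hb : b ≠ 0)
    (hfg : ∀ y : unitInterval, f y = g (b * y)) (N : ℕ) (y : unitInterval) :
    (bernsteinNewton g b N).eval (b * y) = bernsteinApproximation N f y := by
  have hshift := sum_choose_mul_shift_eq_sum_choose_mul_fwdDiff_iter g (b / N) y 0 N
  rw [bernsteinApproximation.apply, bernsteinNewton, eval_finsetSum]
  simp only [eval_monomial, mul_pow]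
  calc _ = ∑ k ∈ Finset.range (N + 1),
          (N.choose k : ℝ) * (y : ℝ) ^ k * (fwdDiff (b / N))^[k] g 0 :=
        Finset.sum_congr rfl fun k _ => by field_simp
    _ = _ := by
        rw [← hshift, Finset.sum_range]
        refine Finset.sum_congr rfl fun k _ => ?_
        rw [bernstein_apply, smul_eq_mul, hfg, zero_add]
        simp only [bernstein.z]
        ring_nf

theorem exists_polynomial_coeff_nonneg_near {f : ℝ → ℝ} {b ε : ℝ} (hb : 0 < b) (hε : 0 < ε)
    (hf : ContinuousOn f (Icc 0 b))
    (hdiff : ∀ (n : ℕ) (h : ℝ), 0 ≤ h → 0 ≤ (fwdDiff h)^[n] f 0) :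
    ∃ p : ℝ[X], (∀ k, 0 ≤ p.coeff k) ∧ ∀ x ∈ Icc 0 b, dist (p.eval x) (f x) < ε := by
  let g : C(unitInterval, ℝ) := ⟨fun y => f (b * y), hf.comp_continuous (by fun_prop) fun y =>
    ⟨mul_nonneg hb.le y.2.1, mul_le_of_le_one_right hb.le y.2.2⟩⟩
  obtain ⟨N, hN⟩ := ((bernsteinApproximation_uniform g).eventually
    (Metric.ball_mem_nhds g hε)).exists
  refine ⟨bernsteinNewton f b N, bernsteinNewton_coeff_nonneg hdiff hb.le N, fun x hx => ?_⟩
  let y : unitInterval := ⟨x / b, div_nonneg hx.1 hb.le, (div_le_one hb).2 hx.2⟩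
  have hxy : x = b * y := (mul_div_cancel₀ x hb.ne').symm
  rw [hxy, eval_bernsteinNewton g hb.ne' (fun _ => rfl)]
  exact (ContinuousMap.dist_lt_iff hε).1 hN y

theorem coeff_mul_pow_le_eval {p : ℝ[X]} (hp : ∀ k, 0 ≤ p.coeff k) {x : ℝ} (hx : 0 ≤ x) (k : ℕ) :
    p.coeff k * x ^ k ≤ p.eval x := by
  rw [eval_eq_sum, Polynomial.sum_def]
  by_cases hk : k ∈ p.support
  · exact Finset.single_le_sum (f := fun i => p.coeff i * x ^ i)
      (fun i _ => mul_nonneg (hp i) (pow_nonneg hx i)) hk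
  · rw [notMem_support_iff.1 hk, zero_mul]
    exact Finset.sum_nonneg fun i _ => mul_nonneg (hp i) (pow_nonneg hx i)

theorem hasSum_coeff_mul_pow (p : ℝ[X]) (x : ℝ) :
    HasSum (fun k => p.coeff k * x ^ k) (p.eval x) := by
  rw [eval_eq_sum, Polynomial.sum_def]
  exact hasSum_sum_of_ne_finset_zero fun k hk => by rw [notMem_support_iff.1 hk, zero_mul]

theorem hasSum_of_tendsto_coeff_of_tendsto_eval {p : ℕ → ℝ[X]} (hp : ∀ m k, 0 ≤ (p m).coeff k)
    {c : ℕ → ℝ} (hc : ∀ k, Tendsto (fun m => (p m).coeff k) atTop (nhds (c k))) {x l r : ℝ}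
    (hx : 0 ≤ x) (hl : Tendsto (fun m => (p m).eval x) atTop (nhds l))
    (hr : Tendsto (fun m => (p m).eval (2 * x)) atTop (nhds r)) :
    HasSum (fun k => c k * x ^ k) l := by
  have hterm (k : ℕ) : Tendsto (fun m => (p m).coeff k * x ^ k) atTop (nhds (c k * x ^ k)) :=
    (hc k).mul_const _
  have hgeometric : Summable fun k : ℕ => (r + 1) * (1 / 2 : ℝ) ^ k :=
    summable_geometric_two.mul_left _
  have hbound : ∀ᶠ m in atTop, ∀ k, ‖(p m).coeff k * x ^ k‖ ≤ (r + 1) * (1 / 2 : ℝ) ^ k := by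
    filter_upwards [hr.eventually_le_const (lt_add_one r)] with m hm k
    rw [Real.norm_of_nonneg (mul_nonneg (hp m k) (pow_nonneg hx k))]
    calc (p m).coeff k * x ^ k = (p m).coeff k * (2 * x) ^ k * (1 / 2) ^ k := by
          rw [mul_assoc, ← mul_pow]
          congr 2
          ring
      _ ≤ (r + 1) * (1 / 2) ^ k := by
          gcongr
          exact (coeff_mul_pow_le_eval (hp m) (by positivity) k).trans hm
  have hsummable : Summable fun k => c k * x ^ k := Summable.of_norm_bounded hgeometric fun k =>
    le_of_tendsto (hterm k).norm (hbound.mono fun m hm => hm k)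
  have htsum := tendsto_tsum_of_dominated_convergence hgeometric hterm hbound
  simp only [(hasSum_coeff_mul_pow _ x).tsum_eq] at htsum
  rw [tendsto_nhds_unique hl htsum]
  exact hsummable.hasSum

theorem exists_hasSum_of_tendsto_eval {p : ℕ → ℝ[X]} (hp : ∀ m k, 0 ≤ (p m).coeff k) {f : ℝ → ℝ}
    (hf : ∀ x, 0 ≤ x → Tendsto (fun m => (p m).eval x) atTop (nhds (f x))) :
    ∃ c : ℕ → ℝ, (∀ k, 0 ≤ c k) ∧ ∀ x, 0 ≤ x → HasSum (fun k => c k * x ^ k) (f x) := by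
  obtain ⟨B, hB⟩ := (hf 1 zero_le_one).bddAbove_range
  have hbox (m : ℕ) : (p m).coeff ∈ pi univ fun _ : ℕ => Icc 0 B := fun k _ =>
    ⟨hp m k, by simpa using (coeff_mul_pow_le_eval (hp m) zero_le_one k).trans (hB ⟨m, rfl⟩)⟩
  obtain ⟨c, hc, φ, hφ, hlim⟩ := (isCompact_univ_pi fun _ => isCompact_Icc).tendsto_subseq hbox
  refine ⟨c, fun k => (hc k (mem_univ k)).1, fun x hx => ?_⟩
  exact hasSum_of_tendsto_coeff_of_tendsto_eval (fun m => hp (φ m)) (tendsto_pi_nhds.1 hlim) hx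
    ((hf x hx).comp hφ.tendsto_atTop) ((hf (2 * x) (by positivity)).comp hφ.tendsto_atTop)

theorem exists_absolutelyMonotonicEntire_of_fwdDiff_nonneg {f : ℝ → ℝ}
    (hf : ContinuousOn f (Ici 0))
    (hdiff : ∀ (n : ℕ) (h : ℝ), 0 ≤ h → 0 ≤ (fwdDiff h)^[n] f 0) :
    ∃ G, AbsolutelyMonotonicEntire G ∧ EqOn f G (Ici 0) := by
  choose p hp hnear using fun m : ℕ => exists_polynomial_coeff_nonneg_near
    (Nat.cast_add_one_pos (α := ℝ) m) (Nat.one_div_pos_of_nat (α := ℝ) (n := m))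
    (hf.mono Icc_subset_Ici_self) hdiff
  have hlim (x : ℝ) (hx : 0 ≤ x) : Tendsto (fun m => (p m).eval x) atTop (nhds (f x)) := by
    refine tendsto_iff_dist_tendsto_zero.2 (squeeze_zero'
      (Eventually.of_forall fun _ => dist_nonneg) ?_ tendsto_one_div_add_atTop_nhds_zero_nat)
    filter_upwards [tendsto_natCast_atTop_atTop.eventually_ge_atTop x] with m hm
    exact (hnear m x ⟨hx, hm.trans (lt_add_one _).le⟩).le
  obtain ⟨c, hc, hsum⟩ := exists_hasSum_of_tendsto_eval hp hlim
  refine ⟨fun x => ∑' k, c k * x ^ k, ⟨c, hc, fun x => Summable.hasSum ?_⟩,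
    fun x hx => (hsum x hx).tsum_eq.symm⟩
  refine Summable.of_norm_bounded (hsum |x| (abs_nonneg x)).summable fun k => ?_
  rw [norm_mul, norm_pow, Real.norm_of_nonneg (hc k), Real.norm_eq_abs]

theorem exists_absolutelyMonotonicEntire_eqOn_Ioi {f : ℝ → ℝ} {L : ℝ}
    (hf : ContinuousOn f (Ioi 0)) (hlim : Tendsto f (nhdsWithin 0 (Ioi 0)) (nhds L))
    (hdiff : ∀ (n : ℕ) (h x : ℝ), 0 ≤ h → 0 < x → 0 ≤ (fwdDiff h)^[n] f x) :
    ∃ G, AbsolutelyMonotonicEntire G ∧ EqOn f G (Ioi 0) := by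
  set f' := Function.update f 0 L
  have hff' : EqOn f' f (Ioi 0) := fun x hx => Function.update_of_ne (ne_of_gt hx) _ _
  have hf' : ContinuousOn f' (Ici 0) := by
    rw [continuousOn_update_iff, Ici_sdiff_left]
    exact ⟨hf, fun _ => hlim⟩
  have hdiff' (n : ℕ) (h : ℝ) (hh : 0 ≤ h) : 0 ≤ (fwdDiff h)^[n] f' 0 := by
    have hlim' : Tendsto (fun x => (fwdDiff h)^[n] f' x) (nhdsWithin 0 (Ioi 0))
        (nhds ((fwdDiff h)^[n] f' 0)) := by
      simp only [fwdDiff_iter_eq_sum_shift]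
      refine tendsto_finsetSum _ fun k _ => Tendsto.const_smul ?_ _
      have hk : 0 ≤ k • h := nsmul_nonneg hh k
      refine (hf' (0 + k • h) (by simpa using hk)).tendsto.comp (tendsto_nhdsWithin_iff.2 ⟨?_, ?_⟩)
      · exact ((continuous_add_const _).tendsto 0).mono_left nhdsWithin_le_nhds
      · exact eventually_nhdsWithin_of_forall fun x hx => add_nonneg (le_of_lt hx) hk
    refine ge_of_tendsto hlim' (eventually_nhdsWithin_of_forall fun x hx => ?_)
    refine (hdiff n h x hh hx).trans_eq ?_
    rw [fwdDiff_iter_eq_sum_shift, fwdDiff_iter_eq_sum_shift]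
    exact Finset.sum_congr rfl fun k _ => by
      rw [hff' (add_pos_of_pos_of_nonneg hx (nsmul_nonneg hh k))]
  obtain ⟨G, hG, hfG⟩ := exists_absolutelyMonotonicEntire_of_fwdDiff_nonneg hf' hdiff'
  exact ⟨G, hG, fun x hx => (hff' hx).symm.trans (hfG (mem_Ici_of_Ioi hx))⟩

end Bernstein

section Monotone

theorem eqOn_Ioi_max_zero (f : ℝ → ℝ) : EqOn (fun x => f (max x 0)) f (Ioi 0) :=
  fun _ hx => congrArg f (max_eq_left (le_of_lt hx))

theorem continuousAt_of_monotone_of_sq_le_mul {f : ℝ → ℝ} (hmono : Monotone f)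
    (hnonneg : ∀ x, 0 ≤ f x)
    (hmul : ∀ x, 0 < x → ∀ u, 0 < u → f (x * u) ^ 2 ≤ f x * f (x * u ^ 2)) {b : ℝ} (hb : 0 < b) :
    ContinuousAt f b := by
  rw [hmono.continuousAt_iff_leftLim_eq_rightLim]
  set L := Function.leftLim f b
  set R := Function.rightLim f b
  have hL : 0 ≤ L := (hnonneg (b - 1)).trans (hmono.le_leftLim (by linarith))
  have hR : 0 ≤ R := (hnonneg b).trans (hmono.le_rightLim le_rfl)
  have sq_rightLim_le (u : ℝ) (hu : 1 < u) : R ^ 2 ≤ L * f (b * u ^ 3) := by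
    have : 0 < u := zero_lt_one.trans hu
    have hmid := hmul (b / u) (by positivity) (u ^ 2) (by positivity)
    rw [show b / u * u ^ 2 = b * u by field_simp,
      show b / u * (u ^ 2) ^ 2 = b * u ^ 3 by field_simp] at hmid
    calc R ^ 2 ≤ f (b * u) ^ 2 := by gcongr; exact hmono.rightLim_le (lt_mul_of_one_lt_right hb hu)
      _ ≤ f (b / u) * f (b * u ^ 3) := hmid
      _ ≤ L * f (b * u ^ 3) := by
        gcongr
        · exact hnonneg _
        · exact hmono.le_leftLim (div_lt_self hb hu)
  have hcube : Tendsto (fun u : ℝ => b * u ^ 3) (nhdsWithin 1 (Ioi 1)) (nhdsWithin b (Ioi b)) := by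
    refine tendsto_nhdsWithin_iff.2 ⟨?_, ?_⟩
    · have hcont : Continuous fun u : ℝ => b * u ^ 3 := by fun_prop
      simpa using (hcont.tendsto 1).mono_left nhdsWithin_le_nhds
    · filter_upwards [self_mem_nhdsWithin] with u hu
      exact lt_mul_of_one_lt_right hb (one_lt_pow₀ hu three_ne_zero)
  have hsq : R ^ 2 ≤ L * R :=
    ge_of_tendsto (((hmono.tendsto_rightLim b).comp hcube).const_mul L)
      (eventually_nhdsWithin_of_forall sq_rightLim_le)
  refine le_antisymm (hmono.leftLim_le_rightLim le_rfl) ?_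
  rcases hR.eq_or_lt with hR | hR
  · exact hR ▸ hL
  · rw [sq] at hsq
    exact le_of_mul_le_mul_right hsq hR

end Monotone

section ForwardDifferences

theorem fwdDiff_iter_nonneg_of_iteratedDeriv_nonneg {g : ℝ → ℝ} {δ h x : ℝ} {n : ℕ}
    (hg : ContDiff ℝ n g) (hderiv : ∀ a, δ < a → 0 ≤ iteratedDeriv n g a) (hh : 0 ≤ h)
    (hx : δ < x) : 0 ≤ (fwdDiff h)^[n] g x := by
  induction n generalizing g with
  | zero => simpa using hderiv x hx
  | succ n ih =>
    have hgn : ContDiff ℝ n g := hg.of_le (by exact_mod_cast n.le_succ)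
    have hshift : ContDiff ℝ n fun y => g (y + h) := hgn.comp (by fun_prop)
    have hmono : MonotoneOn (iteratedDeriv n g) (Ioi δ) := by
      have hdiff : Differentiable ℝ (iteratedDeriv n g) :=
        hg.differentiable_iteratedDeriv n (by exact_mod_cast n.lt_succ_self)
      refine monotoneOn_of_deriv_nonneg (convex_Ioi δ) hdiff.continuous.continuousOn
        hdiff.differentiableOn fun y hy => ?_
      rw [interior_Ioi] at hy
      rw [← iteratedDeriv_succ]
      exact hderiv y hy
    rw [Function.iterate_succ_apply]
    refine ih (hshift.sub hgn) fun a ha => ?_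
    have hsub : iteratedDeriv n (fwdDiff h g) a =
        iteratedDeriv n g (a + h) - iteratedDeriv n g a := by
      rw [← congrFun (iteratedDeriv_comp_add_const n g h) a]
      exact iteratedDeriv_fun_sub hshift.contDiffAt hgn.contDiffAt
    rw [hsub, sub_nonneg]
    exact hmono ha (ha.trans_le (le_add_of_nonneg_right hh)) (le_add_of_nonneg_right hh)

end ForwardDifferences

section Necessity

open Polynomial
open scoped Convolution

theorem rieszFunctional_convolution {φ f : ℝ → ℝ} (hφ : Continuous φ) (hφc : HasCompactSupport φ)
    (hf : LocallyIntegrable f) (y : ℕ → ℝ) (q : ℝ[X]) :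
    rieszFunctional (fun k => (φ ⋆[ContinuousLinearMap.lsmul ℝ ℝ, volume] f) (y k)) q =
      ∫ z, rieszFunctional (fun k => f (y k - z)) q * φ z := by
  have hint (k : ℕ) : Integrable fun z => f (y k - z) * φ z := by
    simpa [ConvolutionExistsAt, mul_comm] using
      hφc.convolutionExists_left (ContinuousLinearMap.lsmul ℝ ℝ) hφ hf (y k)
  simp only [convolution_def, ContinuousLinearMap.lsmul_apply, smul_eq_mul, mul_comm (φ _)]
  rw [rieszFunctional_integral hint]
  simp only [rieszFunctional_mul_const]

/-- `F` passes the two-atom test if it maps the moment sequence `a + b * u ^ k` of each measure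
`a δ₁ + b δᵤ` on `[0, ∞)` to a sequence with positive semidefinite Hankel matrices. -/
def TwoAtomPositive (F : ℝ → ℝ) : Prop :=
  ∀ ⦃a b u : ℝ⦄, 0 ≤ a → 0 ≤ b → 0 ≤ u →
    ∀ n, (hankelMatrix (fun k => F (a + b * u ^ k)) n).PosSemidef

variable {F : ℝ → ℝ}

theorem add_mul_pow_mem_momentSet {a b u : ℝ} (ha : 0 ≤ a) (hb : 0 ≤ b) (hu : 0 ≤ u) :
    (fun k => a + b * u ^ k) ∈ momentSet (Ici 0) := by
  simpa using add_mem_momentSet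
    (const_mul_mem_momentSet ha (pow_mem_momentSet (mem_Ici.2 zero_le_one)))
    (const_mul_mem_momentSet hb (pow_mem_momentSet (mem_Ici.2 hu)))

theorem twoAtomPositive_of_posSemidef_map
    (hF : ∀ (n : ℕ) (A : Matrix (Fin n) (Fin n) ℝ), IsHankelMat A → TotallyNonneg A →
      (A.map F).PosSemidef) : TwoAtomPositive F := fun _ _ _ ha hb hu n =>
  hF n (hankelMatrix _ n) (isHankelMat_hankelMatrix _ n)
    (totallyNonneg_hankelMatrix_of_mem_momentSet (add_mul_pow_mem_momentSet ha hb hu) n)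

theorem twoAtomPositive_of_comp_mem_momentSet
    (hF : ∀ s ∈ momentSet (Ici 0), (fun k => F (s k)) ∈ momentSet (Ici 0)) :
    TwoAtomPositive F := fun _ _ _ ha hb hu n =>
  (totallyNonneg_hankelMatrix_of_mem_momentSet
    (hF _ (add_mul_pow_mem_momentSet ha hb hu)) n).posSemidef
    (isHankelMat_hankelMatrix _ n).isHermitian

namespace TwoAtomPositive

theorem nonneg (hF : TwoAtomPositive F) {x : ℝ} (hx : 0 ≤ x) : 0 ≤ F x := by
  simpa using (hF hx le_rfl le_rfl 1).diag_nonneg (i := 0)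

theorem monotoneOn (hF : TwoAtomPositive F) : MonotoneOn F (Ici 0) := by
  intro x hx y _ hxy
  have hform := (hF hx (sub_nonneg.2 hxy) le_rfl 2).dotProduct_mulVec_nonneg ![1, -1]
  simpa [Matrix.mulVec, dotProduct, Fin.sum_univ_two] using hform

theorem sq_le_mul (hF : TwoAtomPositive F) {x u : ℝ} (hx : 0 ≤ x) (hu : 0 ≤ u) :
    F (x * u) ^ 2 ≤ F x * F (x * u ^ 2) := by
  have hdet := (hF le_rfl hx hu 2).det_nonneg
  simpa [Matrix.det_fin_two, ← sq] using hdet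

theorem monotone_max_zero (hF : TwoAtomPositive F) : Monotone fun x => F (max x 0) :=
  fun _ _ hxy => hF.monotoneOn (mem_Ici.2 (le_max_right _ _)) (mem_Ici.2 (le_max_right _ _))
    (max_le_max_right 0 hxy)

theorem continuousAt_max_zero (hF : TwoAtomPositive F) {x : ℝ} (hx : 0 < x) :
    ContinuousAt (fun x => F (max x 0)) x := by
  refine continuousAt_of_monotone_of_sq_le_mul hF.monotone_max_zero
    (fun _ => hF.nonneg (le_max_right _ _)) (fun y hy u hu => ?_) hx
  simpa only [max_eq_left hy.le, max_eq_left (mul_pos hy hu).le,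
    max_eq_left (mul_pos hy (pow_pos hu 2)).le] using hF.sq_le_mul hy.le hu.le

theorem continuousOn (hF : TwoAtomPositive F) : ContinuousOn F (Ioi 0) := fun _ hx =>
  ((hF.continuousAt_max_zero hx).congr ((eqOn_Ioi_max_zero F).eventuallyEq_of_mem
    (Ioi_mem_nhds hx))).continuousWithinAt

theorem iteratedDeriv_convolution_nonneg (hF : TwoAtomPositive F) (ψ : ContDiffBump (0 : ℝ))
    {a : ℝ} (ha : ψ.rOut < a) (n : ℕ) :
    0 ≤ iteratedDeriv n
      (ψ.normed volume ⋆[ContinuousLinearMap.lsmul ℝ ℝ, volume] fun x => F (max x 0)) a := by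
  have hint : LocallyIntegrable fun x => F (max x 0) := hF.monotone_max_zero.locallyIntegrable
  refine iteratedDeriv_nonneg_of_rieszFunctional_nonneg
    (ψ.hasCompactSupport_normed.contDiff_convolution_left _ ψ.contDiff_normed hint)
    fun t ht p => ?_
  rw [rieszFunctional_convolution ψ.continuous_normed ψ.hasCompactSupport_normed hint]
  refine integral_nonneg fun z => ?_
  by_cases hz : z ∈ Function.support (ψ.normed volume)
  · rw [ψ.support_normed_eq, Metric.mem_ball, Real.dist_0_eq_abs] at hz
    have haz : 0 ≤ a - z := by linarith [le_abs_self z]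
    have hseq : (fun k : ℕ => F (max (a + t * 2 ^ k - z) 0)) =
        fun k => F (a - z + t * 2 ^ k) := by
      funext k
      rw [max_eq_left (by rw [add_sub_right_comm]; positivity), add_sub_right_comm]
    refine mul_nonneg ?_ (ψ.nonneg_normed z)
    rw [hseq]
    exact rieszFunctional_sq_nonneg (hF haz ht zero_le_two) p
  · rw [Function.notMem_support.1 hz, mul_zero]
    exact le_rfl

theorem fwdDiff_iter_convolution_nonneg (hF : TwoAtomPositive F) (ψ : ContDiffBump (0 : ℝ))
    {h x : ℝ} (hh : 0 ≤ h) (hx : ψ.rOut < x) (n : ℕ) :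
    0 ≤ (fwdDiff h)^[n]
      (ψ.normed volume ⋆[ContinuousLinearMap.lsmul ℝ ℝ, volume] fun x => F (max x 0)) x :=
  fwdDiff_iter_nonneg_of_iteratedDeriv_nonneg
    (ψ.hasCompactSupport_normed.contDiff_convolution_left _ ψ.contDiff_normed
      hF.monotone_max_zero.locallyIntegrable)
    (fun _ ha => hF.iteratedDeriv_convolution_nonneg ψ ha n) hh hx

theorem fwdDiff_iter_nonneg (hF : TwoAtomPositive F) (n : ℕ) {h x : ℝ} (hh : 0 ≤ h) (hx : 0 < x) :
    0 ≤ (fwdDiff h)^[n] F x := by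
  let ψ (N : ℕ) : ContDiffBump (0 : ℝ) :=
    ⟨1 / ((N : ℝ) + 1) / 2, 1 / ((N : ℝ) + 1), by positivity, half_lt_self (by positivity)⟩
  have hrOut : Tendsto (fun N => (ψ N).rOut) atTop (nhds 0) :=
    tendsto_one_div_add_atTop_nhds_zero_nat
  have hconv (y : ℝ) (hy : 0 < y) : Tendsto (fun N => ((ψ N).normed volume
      ⋆[ContinuousLinearMap.lsmul ℝ ℝ, volume] fun x => F (max x 0)) y) atTop (nhds (F y)) := by
    rw [← eqOn_Ioi_max_zero F hy]
    exact ContDiffBump.convolution_tendsto_right hrOut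
      (Eventually.of_forall fun _ => hF.monotone_max_zero.measurable.aestronglyMeasurable)
      ((hF.continuousAt_max_zero hy).tendsto.comp tendsto_snd) tendsto_const_nhds
  have hlim : Tendsto (fun N => (fwdDiff h)^[n] ((ψ N).normed volume
      ⋆[ContinuousLinearMap.lsmul ℝ ℝ, volume] fun x => F (max x 0)) x) atTop
      (nhds ((fwdDiff h)^[n] F x)) := by
    simp only [fwdDiff_iter_eq_sum_shift]
    exact tendsto_finsetSum _ fun k _ => (hconv _ (by positivity)).const_smul _
  refine ge_of_tendsto hlim ?_
  filter_upwards [hrOut.eventually_lt_const hx] with N hN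
  exact hF.fwdDiff_iter_convolution_nonneg (ψ N) hh hN n

theorem exists_tendsto_nhdsGT_zero (hF : TwoAtomPositive F) :
    ∃ L, Tendsto F (nhdsWithin 0 (Ioi 0)) (nhds L) ∧ F 0 ≤ L := by
  refine ⟨Function.rightLim (fun x => F (max x 0)) 0, ?_, ?_⟩
  · exact (hF.monotone_max_zero.tendsto_rightLim 0).congr'
      ((eqOn_Ioi_max_zero F).eventuallyEq_of_mem self_mem_nhdsWithin)
  · simpa using hF.monotone_max_zero.le_rightLim (le_refl 0)

theorem exists_absolutelyMonotonicEntire (hF : TwoAtomPositive F) :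
    ∃ G, AbsolutelyMonotonicEntire G ∧ EqOn F G (Ioi 0) ∧
      0 ≤ F 0 ∧ ∃ L, Tendsto F (nhdsWithin 0 (Ioi 0)) (nhds L) ∧ F 0 ≤ L := by
  obtain ⟨L, hlim, hL⟩ := hF.exists_tendsto_nhdsGT_zero
  obtain ⟨G, hG, hFG⟩ := exists_absolutelyMonotonicEntire_eqOn_Ioi hF.continuousOn hlim
    fun n _ _ hh hx => hF.fwdDiff_iter_nonneg n hh hx
  exact ⟨G, hG, hFG, hF.nonneg le_rfl, L, hlim, hL⟩

end TwoAtomPositive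

end Necessity

/-- Characterization of the entrywise preservers of totally non-negative Hankel matrices. -/
theorem totally_nonneg_hankel_preserver_TFAE (F : ℝ → ℝ) :
    List.TFAE
      [∀ (n : ℕ) (A : Matrix (Fin n) (Fin n) ℝ), IsHankelMat A → TotallyNonneg A →
          (A.map F).PosSemidef,
        ∀ (n : ℕ) (A : Matrix (Fin n) (Fin n) ℝ), IsHankelMat A → TotallyNonneg A →
          IsHankelMat (A.map F) ∧ TotallyNonneg (A.map F),
        ∀ s ∈ momentSet (Set.Ici (0 : ℝ)),
          (fun k => F (s k)) ∈ momentSet (Set.Ici (0 : ℝ)),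
        ∃ G : ℝ → ℝ, AbsolutelyMonotonicEntire G ∧ (∀ x ∈ Set.Ioi (0 : ℝ), F x = G x) ∧
          0 ≤ F 0 ∧ ∃ L : ℝ, Tendsto F (nhdsWithin 0 (Set.Ioi 0)) (nhds L) ∧ F 0 ≤ L] := by
  tfae_have 2 → 1 := fun hF n A hankel hA =>
    (hF n A hankel hA).2.posSemidef (hF n A hankel hA).1.isHermitian
  tfae_have 1 → 4 := fun hF =>
    (twoAtomPositive_of_posSemidef_map hF).exists_absolutelyMonotonicEntire
  tfae_have 3 → 4 := fun hF =>
    (twoAtomPositive_of_comp_mem_momentSet hF).exists_absolutelyMonotonicEntire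
  tfae_have 4 → 2 := by
    rintro ⟨G, hG, hFG, hF0, L, hlim, hL⟩ n A hankel hA
    obtain ⟨s, rfl⟩ := hankel.exists_eq_hankelMatrix
    exact ⟨isHankelMat_hankelMatrix (fun k => F (s k)) n,
      totallyNonneg_hankelMatrix_comp_of_eqOn_Ioi hG hFG hF0
        (fun _ => hG.apply_zero_le_of_eqOn_Ioi hFG hlim hL) hA⟩
  tfae_have 4 → 3 := by
    rintro ⟨G, hG, hFG, hF0, L, hlim, hL⟩ s hs
    exact comp_mem_momentSet_of_eqOn_Ioi hG hFG hF0
      (fun _ => hG.apply_zero_le_of_eqOn_Ioi hFG hlim hL) hs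
  tfae_finish
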